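/- Let q be a prime power and n a positive integer. Let k be a divisor of q^n − 1 and let p_1, …, p_s (s ≥ 0) be the distinct primes that divide q^n − 1 but do not divide k. Set δ = 1 − Σ_{i=1}^{s} 1/p_i (with δ = 1 if s = 0) and suppose δ > 0; set Δ = (s − 1)/δ + 2. If q^{n/2 − 2} > 4·Δ·2^{ω(k)}, then for every a, b in F_q there exists a nonzero element ξ in F_{q^n} such that Tr(ξ) = a, Tr(ξ^{-1}) = b, and ξ + ξ^{-1} is a primitive element of F_{q^n}. -/

import Mathlib

namespace WB
universe uu

/-- Existence of the function field of our curve with a valuation at infinity. -/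
theorem ff_exists (E : Type uu) [Field E] (d P : ℕ) (hd : 0 < d) (hP : 2 ≤ P) (a u v b : E) :
    ∃ (L : Type uu) (_ : Field L) (_ : Algebra E L) (V : ValuationSubring L) (x y z : L),
      (∀ c : E, c ≠ 0 → V.valuation (algebraMap E L c) = 1) ∧ 1 < V.valuation x ∧
      y ^ d = algebraMap E L a * (x + x⁻¹) ∧
      z ^ P - z = algebraMap E L u * x + algebraMap E L v * x⁻¹ + algebraMap E L b := by
  let L := AlgebraicClosure (RatFunc E)
  let x : L := algebraMap (RatFunc E) L RatFunc.X
  have htr : Transcendental E x := by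
    have h1 : Transcendental E (RatFunc.X : RatFunc E) := by
      simpa using RatFunc.transcendental_X (K := E)
    exact (transcendental_algebraMap_iff (algebraMap (RatFunc E) L).injective).2 h1
  obtain ⟨y, hy⟩ := IsAlgClosed.exists_pow_nat_eq (algebraMap E L a * (x + x⁻¹)) hd
  let c := algebraMap E L u * x + algebraMap E L v * x⁻¹ + algebraMap E L b
  obtain ⟨z, hz⟩ : ∃ z : L, z ^ P - z = c := by
    have hdeg : (Polynomial.X ^ P - (Polynomial.X + Polynomial.C c) : Polynomial L).degree = P := by
      rw [Polynomial.degree_sub_eq_left_of_degree_lt]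
      · simp
      · rw [Polynomial.degree_X_pow, Polynomial.degree_X_add_C]
        exact_mod_cast hP
    obtain ⟨z, hz⟩ := IsAlgClosed.exists_root
      (Polynomial.X ^ P - (Polynomial.X + Polynomial.C c) : Polynomial L) (by
        rw [hdeg]; exact_mod_cast (by omega : P ≠ 0))
    refine ⟨z, ?_⟩
    simp [Polynomial.IsRoot] at hz
    linear_combination hz
  let R : Subring L := (integralClosure E L).toSubring
  have hR : IsIntegrallyClosedIn R L := by
    have : IsIntegrallyClosedIn (integralClosure E L) L := inferInstance
    exact this
  have hx : x ∉ R := by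
    intro h
    have : IsIntegral E x := h
    exact htr this.isAlgebraic
  obtain ⟨V, hV, hxV⟩ := Subring.exists_le_valuationSubring_of_isIntegrallyClosedIn hx
  refine ⟨L, inferInstance, inferInstance, V, x, y, z, ?_, ?_, hy, hz⟩
  · intro c hc
    have hle : ∀ c : E, V.valuation (algebraMap E L c) ≤ 1 := fun c => by
      rw [ValuationSubring.valuation_le_one_iff]
      exact hV (show IsIntegral E (algebraMap E L c) from isIntegral_algebraMap)
    refine le_antisymm (hle c) ?_
    have := hle c⁻¹
    rw [map_inv₀, map_inv₀] at this
    have h0 : V.valuation (algebraMap E L c) ≠ 0 := by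
      simpa using hc
    exact (inv_le_one₀ (zero_lt_iff.2 h0)).1 this
  · rw [← not_le, ValuationSubring.valuation_le_one_iff]; exact hxV

/-- monomials -/
def mon {W : Type*} [CommRing W] (X Y Z : W) (t : ℕ × ℕ × ℕ) : W := X ^ t.1 * Y ^ t.2.1 * Z ^ t.2.2

/-- weights -/
def wt (d P : ℕ) (t : ℕ × ℕ × ℕ) : ℕ := d * P * t.1 + (d * P + P) * t.2.1 + (d * P + d) * t.2.2

/-- filtration -/
def AA (E : Type*) [Field E] {W : Type*} [CommRing W] [Algebra E W] (d P : ℕ) (X Y Z : W) (M : ℕ) :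
    Submodule E W := Submodule.span E (Set.image (mon X Y Z) {t | wt d P t ≤ M})

section
variable {E : Type*} [Field E] {W : Type*} [CommRing W] [Algebra E W] (d P : ℕ) (X Y Z : W)

theorem AA_mono {M N : ℕ} (h : M ≤ N) : AA E d P X Y Z M ≤ AA E d P X Y Z N :=
  Submodule.span_mono (Set.image_mono fun _ ht => le_trans ht h)

theorem mon_mem {M : ℕ} (t : ℕ × ℕ × ℕ) (h : wt d P t ≤ M) : mon X Y Z t ∈ AA E d P X Y Z M :=
  Submodule.subset_span ⟨t, h, rfl⟩

theorem AA_mul {M N : ℕ} {f g : W} (hf : f ∈ AA E d P X Y Z M) (hg : g ∈ AA E d P X Y Z N) :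
    f * g ∈ AA E d P X Y Z (M + N) := by
  have := Submodule.mul_mem_mul hf hg
  rw [AA, AA, Submodule.span_mul_span] at this
  refine Submodule.span_mono ?_ this
  rintro _ ⟨_, ⟨s, hs, rfl⟩, _, ⟨t, ht, rfl⟩, rfl⟩
  refine ⟨s + t, ?_, ?_⟩
  · simp only [Set.mem_setOf_eq, wt, Prod.fst_add, Prod.snd_add] at *
    nlinarith
  · simp [mon, pow_add]; ring

theorem AA_one {M : ℕ} : (1 : W) ∈ AA E d P X Y Z M := by
  have := mon_mem (E := E) d P X Y Z (M := M) (0, 0, 0) (by simp [wt])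
  simpa [mon] using this

theorem AA_pow {M : ℕ} {f : W} (hf : f ∈ AA E d P X Y Z M) (n : ℕ) :
    f ^ n ∈ AA E d P X Y Z (n * M) := by
  induction n with
  | zero => simpa using AA_one d P X Y Z
  | succ n ih =>
    rw [pow_succ, Nat.succ_mul]
    exact AA_mul d P X Y Z ih hf

/-- reduced monomials span -/
def redSet (M : ℕ) : Set (ℕ × ℕ × ℕ) := {t | wt d P t ≤ M ∧ t.2.1 < d ∧ t.2.2 < P}

theorem mon_red (hd : 0 < d) (hP : 2 ≤ P) (a u v b : E)
    (hY : Y ^ d = a • (X ^ (d + 1) + X ^ (d - 1)))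
    (hZ : Z ^ P = X ^ (P - 1) * Z + u • X ^ (P + 1) + v • X ^ (P - 1) + b • X ^ P) (M : ℕ) :
    ∀ (n : ℕ) (t : ℕ × ℕ × ℕ), t.2.1 + t.2.2 ≤ n → wt d P t ≤ M →
      mon X Y Z t ∈ Submodule.span E (Set.image (mon X Y Z) (redSet d P M)) := by
  intro n
  induction n using Nat.strong_induction_on with
  | _ n ih =>
  rintro ⟨i, j, k⟩ hn hw
  simp only at hn
  by_cases hj : j < d
  · by_cases hk : k < P
    · exact Submodule.subset_span ⟨_, ⟨hw, hj, hk⟩, rfl⟩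
    · push Not at hk
      obtain ⟨k, rfl⟩ := Nat.exists_eq_add_of_le hk
      obtain ⟨P, rfl⟩ := Nat.exists_eq_add_of_le hP
      have e : mon X Y Z (i, j, 2 + P + k) = mon X Y Z (i + (P+1), j, k + 1)
          + u • mon X Y Z (i + (P+3), j, k) + v • mon X Y Z (i + (P+1), j, k)
          + b • mon X Y Z (i + (P+2), j, k) := by
        simp only [mon]
        rw [pow_add Z, hZ, show 2 + P - 1 = P + 1 by omega]
        simp only [Algebra.smul_def]
        ring
      rw [e]
      simp only [wt] at hw
      refine add_mem (add_mem (add_mem ?_ (Submodule.smul_mem _ _ ?_)) (Submodule.smul_mem _ _ ?_))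
        (Submodule.smul_mem _ _ ?_)
      all_goals
        refine ih (n - 1) (by omega) _ (by simp only; omega) ?_
        simp only [wt]
        nlinarith
  · push Not at hj
    obtain ⟨j, rfl⟩ := Nat.exists_eq_add_of_le hj
    obtain ⟨d, rfl⟩ := Nat.exists_eq_add_of_le' hd
    have e : mon X Y Z (i, (d + 1) + j, k) = a • mon X Y Z (i + (d+2), j, k)
          + a • mon X Y Z (i + d, j, k) := by
        simp only [mon]
        rw [pow_add Y, hY, show d + 1 - 1 = d by omega]
        simp only [Algebra.smul_def]
        ring
    rw [e]
    simp only [wt] at hw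
    refine add_mem (Submodule.smul_mem _ _ ?_) (Submodule.smul_mem _ _ ?_)
    all_goals
        refine ih (n - 1) (by omega) _ (by simp only; omega) ?_
        simp only [wt]
        nlinarith

theorem wt_inj (hcop : Nat.Coprime d P) {s t : ℕ × ℕ × ℕ} (hs : s.2.1 < d) (hs' : s.2.2 < P)
    (ht : t.2.1 < d) (ht' : t.2.2 < P) (h : wt d P s = wt d P t) : s = t := by
  obtain ⟨i, j, k⟩ := s
  obtain ⟨i', j', k'⟩ := t
  simp only [wt] at *
  have hj : j = j' := by
    have h1 : P * j ≡ P * j' [MOD d] := by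
      have := congrArg (· % d) h
      rw [Nat.ModEq]
      have e : ∀ i j k, (d * P * i + (d * P + P) * j + (d * P + d) * k) = P * j + d * (P * i + P * j + P * k + k) := by
        intros; ring
      simpa [e] using this
    have h2 := Nat.ModEq.cancel_left_of_coprime hcop h1
    rwa [Nat.ModEq, Nat.mod_eq_of_lt hs, Nat.mod_eq_of_lt ht] at h2
  have hk : k = k' := by
    have h1 : d * k ≡ d * k' [MOD P] := by
      have := congrArg (· % P) h
      rw [Nat.ModEq]
      have e : ∀ i j k, (d * P * i + (d * P + P) * j + (d * P + d) * k) = d * k + P * (d * i + d * j + j + d * k) := by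
        intros; ring
      simpa [e] using this
    have h2 := Nat.ModEq.cancel_left_of_coprime hcop.symm h1
    rwa [Nat.ModEq, Nat.mod_eq_of_lt hs', Nat.mod_eq_of_lt ht'] at h2
  subst hj hk
  have hpos : 0 < d * P := Nat.mul_pos (by omega) (by omega)
  have : d * P * i = d * P * i' := by omega
  rw [Nat.eq_of_mul_eq_mul_left hpos this]

theorem AA_eq_red (hd : 0 < d) (hP : 2 ≤ P) (a u v b : E)
    (hY : Y ^ d = a • (X ^ (d + 1) + X ^ (d - 1)))
    (hZ : Z ^ P = X ^ (P - 1) * Z + u • X ^ (P + 1) + v • X ^ (P - 1) + b • X ^ P) (M : ℕ) :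
    AA E d P X Y Z M = Submodule.span E (Set.image (mon X Y Z) (redSet d P M)) := by
  apply le_antisymm
  · rw [AA, Submodule.span_le]
    rintro _ ⟨t, ht, rfl⟩
    exact mon_red d P X Y Z hd hP a u v b hY hZ M _ t le_rfl ht
  · exact Submodule.span_mono (Set.image_mono fun t ht => ht.1)

theorem redSet_finite (hcop : Nat.Coprime d P) (M : ℕ) : (redSet d P M).Finite ∧ (redSet d P M).ncard ≤ M + 1 := by
  have hinj : Set.InjOn (wt d P) (redSet d P M) := fun s hs t ht h =>
    wt_inj d P hcop hs.2.1 hs.2.2 ht.2.1 ht.2.2 h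
  have hmaps : Set.MapsTo (wt d P) (redSet d P M) (Set.Iic M) := fun s hs => hs.1
  refine ⟨Set.Finite.of_injOn hmaps hinj (Set.finite_Iic M), ?_⟩
  have := Set.ncard_le_ncard_of_injOn _ hmaps hinj (Set.finite_Iic M)
  simpa [Set.ncard_eq_toFinset_card'] using this

theorem finrank_AA_le (hd : 0 < d) (hP : 2 ≤ P) (hcop : Nat.Coprime d P) (a u v b : E)
    (hY : Y ^ d = a • (X ^ (d + 1) + X ^ (d - 1)))
    (hZ : Z ^ P = X ^ (P - 1) * Z + u • X ^ (P + 1) + v • X ^ (P - 1) + b • X ^ P) (M : ℕ) :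
    FiniteDimensional E (AA E d P X Y Z M) ∧ Module.finrank E (AA E d P X Y Z M) ≤ M + 1 := by
  rw [AA_eq_red d P X Y Z hd hP a u v b hY hZ]
  obtain ⟨hf, hc⟩ := redSet_finite d P hcop M
  have hf' := hf.image (mon X Y Z)
  refine ⟨FiniteDimensional.span_of_finite E hf', ?_⟩
  have := hf'.fintype
  refine (finrank_span_le_card _).trans ?_
  rw [← Set.ncard_eq_toFinset_card']
  exact (Set.ncard_image_le hf).trans hc

end

/-- nonvanishing of sums with distinct valuations -/
theorem sum_ne_zero_of_val {L Γ ι : Type*} [Field L] [LinearOrderedCommGroupWithZero Γ]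
    (v : Valuation L Γ) (s : Finset ι) (hs : s.Nonempty) (f : ι → L) (hf : ∀ i ∈ s, f i ≠ 0)
    (hinj : ∀ i ∈ s, ∀ j ∈ s, v (f i) = v (f j) → i = j) : ∑ i ∈ s, f i ≠ 0 := by
  classical
  obtain ⟨j, hj, hmax⟩ := s.exists_max_image (fun i => v (f i)) hs
  have := v.map_sum_eq_of_lt (f := f) hj (fun i hi => by
    simp only [Finset.mem_sdiff, Finset.mem_singleton] at hi
    exact lt_of_le_of_ne (hmax i hi.1) (fun h => hi.2 (hinj i hi.1 j hj h)))
  intro h0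
  rw [h0, map_zero] at this
  exact hf j hj (by simpa using this.symm)

end WB

namespace WB
universe uu

section
variable {E : Type*} [Field E] {L Γ : Type*} [Field L] [Algebra E L]
  [LinearOrderedCommGroupWithZero Γ] (ν : Valuation L Γ) (d P : ℕ) (x y z : L)

theorem val_mon (hP : 2 ≤ P) (a u v b : E) (ha : a ≠ 0) (hu : u ≠ 0)
    (hc : ∀ c : E, c ≠ 0 → ν (algebraMap E L c) = 1) (hx : 1 < ν x)
    (hy : y ^ d = algebraMap E L a * (x + x⁻¹))
    (hz : z ^ P - z = algebraMap E L u * x + algebraMap E L v * x⁻¹ + algebraMap E L b)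
    (t : ℕ × ℕ × ℕ) : ν (mon x (x * y) (x * z) t) ^ (d * P) = ν x ^ wt d P t := by
  have hc' : ∀ c : E, ν (algebraMap E L c) ≤ 1 := fun c => by
    by_cases h : c = 0
    · simp [h]
    · exact (hc c h).le
  have hxi : ν x⁻¹ < 1 := by
    rw [map_inv₀]; exact inv_lt_one_of_one_lt₀ hx
  have hy' : ν y ^ d = ν x := by
    rw [← map_pow, hy, map_mul, hc a ha, one_mul]
    exact ν.map_add_eq_of_lt_left (hxi.trans hx)
  have hz1 : ν (z ^ P - z) = ν x := by
    rw [hz, add_assoc, ν.map_add_eq_of_lt_left]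
    · rw [map_mul, hc u hu, one_mul]
    · rw [map_mul ν _ x, hc u hu, one_mul]
      refine lt_of_le_of_lt ?_ hx
      refine ν.map_add_le ?_ (hc' b)
      rw [map_mul]
      exact mul_le_one' (hc' v) hxi.le
  have hz2 : 1 < ν z := by
    by_contra h
    push Not at h
    have : ν (z ^ P - z) ≤ 1 := by
      refine ν.map_sub_le ?_ h
      rw [map_pow]; exact pow_le_one' h P
    rw [hz1] at this
    exact absurd hx (not_lt.2 this)
  have hz' : ν z ^ P = ν x := by
    rw [← hz1, ν.map_sub_eq_of_lt_left, map_pow]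
    rw [map_pow]
    calc ν z = ν z ^ 1 := (pow_one _).symm
      _ < ν z ^ P := pow_lt_pow_right₀ hz2 (by omega)
  simp only [mon, map_mul, map_pow, wt]
  calc _ = (ν x ^ (d * P)) ^ t.1 * ((ν x ^ (d * P)) ^ t.2.1 * ((ν y ^ d) ^ P) ^ t.2.1) *
        ((ν x ^ (d * P)) ^ t.2.2 * ((ν z ^ P) ^ d) ^ t.2.2) := by
        simp only [mul_pow, ← pow_mul]
        ring_nf
    _ = _ := by
        rw [hy', hz']
        simp only [← pow_mul, ← pow_add]
        congr 1; ring

theorem indep_mon {ι : Type*} (s : Finset ι) (τ : ι → ℕ × ℕ × ℕ)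
    (hc : ∀ c : E, c ≠ 0 → ν (algebraMap E L c) = 1) (hx : 1 < ν x)
    (hν : ∀ t, ν (mon x (x * y) (x * z) t) ^ (d * P) = ν x ^ wt d P t)
    (hinj : ∀ i ∈ s, ∀ j ∈ s, wt d P (τ i) = wt d P (τ j) → i = j)
    (c : ι → E) (h : ∑ i ∈ s, c i • mon x (x * y) (x * z) (τ i) = 0) (hdP : d * P ≠ 0) : ∀ i ∈ s, c i = 0 := by
  classical
  by_contra! hcon
  obtain ⟨i, hi, hci⟩ := hcon
  have hval : ∀ i, c i ≠ 0 → ν (c i • mon x (x * y) (x * z) (τ i)) ^ (d * P) = ν x ^ wt d P (τ i) := by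
    intro i hi
    rw [Algebra.smul_def, map_mul, hc _ hi, one_mul, hν]
  refine sum_ne_zero_of_val ν (s.filter fun i => c i ≠ 0) ⟨i, by simp [hi, hci]⟩
    (fun i => c i • mon x (x * y) (x * z) (τ i)) ?_ ?_ ?_
  · intro i hi h0
    have := hval i (Finset.mem_filter.1 hi).2
    rw [h0, map_zero, zero_pow hdP] at this
    exact pow_ne_zero _ (zero_lt_one.trans hx).ne' this.symm
  · intro i hi j hj hij
    have h1 := hval i (Finset.mem_filter.1 hi).2
    have h2 := hval j (Finset.mem_filter.1 hj).2
    rw [hij, h2] at h1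
    exact hinj i (Finset.mem_filter.1 hi).1 j (Finset.mem_filter.1 hj).1
      (pow_right_injective₀ (zero_lt_one.trans hx) hx.ne' h1).symm
  · rw [← h, Finset.sum_filter]
    refine Finset.sum_congr rfl fun i _ => ?_
    split_ifs with h
    · rfl
    · push Not at h; simp [h]
end

theorem mon_map {W W' : Type*} [CommRing W] [CommRing W'] (f : W →+* W') (X Y Z : W) (t : ℕ × ℕ × ℕ) :
    f (mon X Y Z t) = mon (f X) (f Y) (f Z) t := by simp [mon]

theorem mon_mul_mon_pow {W : Type*} [CommRing W] (X Y Z : W) (s t : ℕ × ℕ × ℕ) (r : ℕ) :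
    mon X Y Z s * mon X Y Z t ^ r = mon X Y Z (s + r • t) := by
  simp only [mon, Prod.fst_add, Prod.snd_add, Prod.smul_fst, Prod.smul_snd, smul_eq_mul]
  ring

theorem wt_add (d P : ℕ) (s t : ℕ × ℕ × ℕ) (r : ℕ) : wt d P (s + r • t) = wt d P s + r * wt d P t := by
  simp only [wt, Prod.fst_add, Prod.snd_add, Prod.smul_fst, Prod.smul_snd, smul_eq_mul]
  ring

/-- index boxes -/
def box (d P T : ℕ) : Finset (ℕ × ℕ × ℕ) := Finset.range T ×ˢ Finset.range d ×ˢ Finset.range P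

/-- constant -/
def C0 (d P : ℕ) : ℕ := (d * P + P) * d + (d * P + d) * P

theorem box_card (d P T : ℕ) : (box d P T).card = d * P * T := by
  simp [box]; ring

theorem box_wt {d P T : ℕ} {t : ℕ × ℕ × ℕ} (ht : t ∈ box d P T) (hd : 0 < d) (hP : 2 ≤ P) :
    wt d P t < d * P * T + C0 d P := by
  simp only [box, Finset.mem_product, Finset.mem_range] at ht
  obtain ⟨h1, h2, h3⟩ := ht
  simp only [wt, C0]
  have e1 : d * P * t.1 ≤ d * P * T := Nat.mul_le_mul_left _ h1.le
  have e2 : (d * P + P) * t.2.1 < (d * P + P) * d := Nat.mul_lt_mul_of_pos_left h2 (by positivity)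
  have e3 : (d * P + d) * t.2.2 ≤ (d * P + d) * P := Nat.mul_le_mul_left _ h3.le
  omega

theorem box_inj {d P T T' : ℕ} {s t : ℕ × ℕ × ℕ} (hcop : Nat.Coprime d P)
    (hs : s ∈ box d P T) (ht : t ∈ box d P T') (h : wt d P s = wt d P t) : s = t := by
  simp only [box, Finset.mem_product, Finset.mem_range] at hs ht
  exact wt_inj d P hcop hs.2.1 hs.2.2 ht.2.1 ht.2.2 h

/-- dimension count -/
theorem dim_count {E V U B : Type*} [Field E] [AddCommGroup V] [Module E V] [AddCommGroup U] [Module E U]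
    [Fintype B] (A : Submodule E V) [FiniteDimensional E A] (ev : A →ₗ[E] U)
    (hs : LinearMap.range ev = ⊤) (w : B → V) (hw : ∀ i, w i ∈ A) (h0 : ∀ i, ev ⟨w i, hw i⟩ = 0)
    (hli : ∀ g : B → E, ∑ i, g i • w i = 0 → ∀ i, g i = 0) :
    Module.finrank E U + Fintype.card B ≤ Module.finrank E A := by
  let w' : B → LinearMap.ker ev := fun i => ⟨⟨w i, hw i⟩, h0 i⟩
  have hw' : LinearIndependent E w' := by
    refine Fintype.linearIndependent_iff.2 fun g hg => hli g ?_
    have := congrArg (fun s : LinearMap.ker ev => (s.1.1 : V)) hg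
    simpa [w'] using this
  have hk := hw'.fintype_card_le_finrank
  have hrn := LinearMap.finrank_range_add_finrank_ker ev
  rw [hs, finrank_top] at hrn
  omega

set_option maxHeartbeats 1000000 in
/-- Bombieri-Stepanov point bound with parameters. -/
theorem curve_bound_param (E : Type uu) [Field E] [Fintype E] (d P : ℕ) (hd : 0 < d) (hP : 2 ≤ P)
    (hcop : Nat.Coprime d P) (a u v b : E) (ha : a ≠ 0) (hu : u ≠ 0)
    (p l r : ℕ) [Fact p.Prime] [CharP E p] (hr : r = p ^ l) (hE : Fintype.card E = r ^ 2)
    (pts : Finset (E × E × E))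
    (hpts : ∀ t ∈ pts, t.1 ≠ 0 ∧ t.2.1 ^ d = a * (t.1 + t.1⁻¹) ∧
      t.2.2 ^ P - t.2.2 = u * t.1 + v * t.1⁻¹ + b)
    (T1 T2 : ℕ) (hT2 : d * P * T2 + C0 d P ≤ r)
    (hbig : r * (d * P * T2 + C0 d P) + (d * P * T1 + C0 d P) + 1 < (d * P * T1) * (d * P * T2)) :
    pts.card ≤ (d * P * T2 + C0 d P) + r * (d * P * T1 + C0 d P) + C0 d P + 1 := by
  classical
  obtain ⟨L, _, _, V, x, y, z, hc, hx, hy, hz⟩ := ff_exists E d P hd hP a u v b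
  set ν := V.valuation
  have hν := val_mon ν d P x y z hP a u v b ha hu hc hx hy hz
  have hdP : d * P ≠ 0 := by positivity
  have hx0 : x ≠ 0 := by rintro rfl; simp at hx
  let X : (L × (pts → E)) := (x, fun t => t.1.1)
  let Y : (L × (pts → E)) := (x * y, fun t => t.1.1 * t.1.2.1)
  let Z : (L × (pts → E)) := (x * z, fun t => t.1.1 * t.1.2.2)
  have hY : Y ^ d = a • (X ^ (d + 1) + X ^ (d - 1)) := by
    obtain ⟨d, rfl⟩ := Nat.exists_eq_add_of_le' hd
    have key : ∀ (F : Type uu) [Field F] (x y a : F), x ≠ 0 → y ^ (d + 1) = a * (x + x⁻¹) →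
        (x * y) ^ (d + 1) = a * (x ^ (d + 1 + 1) + x ^ (d + 1 - 1)) := by
      intro F _ x y a hx h
      rw [mul_pow, h, show d + 1 - 1 = d by omega]
      field_simp
      ring
    ext t
    · simp only [Y, X, Prod.pow_fst, Prod.smul_fst, Prod.fst_add, Algebra.smul_def]
      exact key L x y _ hx0 hy
    · simp only [Y, X, Prod.pow_snd, Prod.smul_snd, Prod.snd_add, Pi.pow_apply, Pi.smul_apply, Pi.add_apply, smul_eq_mul]
      exact key E _ _ _ (hpts t.1 t.2).1 (hpts t.1 t.2).2.1
  have hZ : Z ^ P = X ^ (P - 1) * Z + u • X ^ (P + 1) + v • X ^ (P - 1) + b • X ^ P := by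
    obtain ⟨P, rfl⟩ := Nat.exists_eq_add_of_le' hP
    have key : ∀ (F : Type uu) [Field F] (x z u v b : F), x ≠ 0 → z ^ (P + 2) - z = u * x + v * x⁻¹ + b →
        (x * z) ^ (P + 2) = x ^ (P + 2 - 1) * (x * z) + u * x ^ (P + 2 + 1) + v * x ^ (P + 2 - 1) + b * x ^ (P + 2) := by
      intro F _ x z u v b hx h
      rw [mul_pow, eq_add_of_sub_eq h, show P + 2 - 1 = P + 1 by omega]
      field_simp
      ring
    ext t
    · simp only [Z, X, Prod.pow_fst, Prod.smul_fst, Prod.fst_add, Prod.fst_mul, Algebra.smul_def]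
      exact key L x z _ _ _ hx0 hz
    · simp only [Z, X, Prod.pow_snd, Prod.smul_snd, Prod.snd_add, Prod.snd_mul, Pi.mul_apply, Pi.pow_apply, Pi.smul_apply, Pi.add_apply, smul_eq_mul]
      exact key E _ _ _ _ _ (hpts t.1 t.2).1 (hpts t.1 t.2).2.2
  have hfst : ∀ t, (mon X Y Z t).1 = mon x (x * y) (x * z) t := fun t =>
    mon_map (RingHom.fst L (pts → E)) X Y Z t
  -- injectivity of the first projection
  have hproj : ∀ M, ∀ f ∈ AA E d P X Y Z M, f.1 = 0 → f = 0 := by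
    intro M f hf h0
    rw [AA_eq_red d P X Y Z hd hP a u v b hY hZ] at hf
    obtain ⟨c, hc1, rfl⟩ := (Finsupp.mem_span_image_iff_linearCombination E).1 hf
    rw [Finsupp.linearCombination_apply, Finsupp.sum] at h0 ⊢
    rw [Prod.fst_sum] at h0
    simp only [Prod.smul_fst, hfst] at h0
    have := indep_mon ν d P x y z c.support id hc hx hν (fun i hi j hj hij => by
      have hi := hc1 hi
      have hj := hc1 hj
      exact wt_inj d P hcop hi.2.1 hi.2.2 hj.2.1 hj.2.2 hij) c h0 hdP
    exact Finset.sum_eq_zero fun i hi => by rw [this i hi, zero_smul]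
  have hfr := finrank_AA_le d P X Y Z hd hP hcop a u v b hY hZ
  -- Frobenius
  have hpp : p.Prime := Fact.out
  have : CharP L p := charP_of_injective_algebraMap (algebraMap E L).injective p
  have : CharP (L × (pts → E)) p := charP_of_injective_ringHom (f := algebraMap E (L × (pts → E))) (by
    intro a b h
    exact (algebraMap E L).injective (congrArg Prod.fst h)) p
  have hfrob : ∀ {ι : Type} (s : Finset ι) (f : ι → (L × (pts → E))), (∑ i ∈ s, f i) ^ r = ∑ i ∈ s, f i ^ r := by
    intro ι s f
    rw [hr]; exact sum_pow_char_pow p l s f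
  -- Step 1
  let B1 := box d P T1
  let B2 := box d P T2
  obtain ⟨c, hcne, hc0⟩ : ∃ c : (B1 × B2) → E, c ≠ 0 ∧
      ∑ i, c i • (mon X Y Z i.2.1 ^ r * mon X Y Z i.1.1) = 0 := by
    let A := AA E d P X Y Z (r * (d * P * T2 + C0 d P) + (d * P * T1 + C0 d P))
    have := (hfr (r * (d * P * T2 + C0 d P) + (d * P * T1 + C0 d P))).1
    let w : (B1 × B2) → A := fun i => ⟨mon X Y Z i.2.1 ^ r * mon X Y Z i.1.1,
      AA_mul d P X Y Z (AA_pow d P X Y Z (mon_mem d P X Y Z _ (box_wt i.2.2 hd hP).le) r)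
        (mon_mem d P X Y Z _ (box_wt i.1.2 hd hP).le)⟩
    have hnli : ¬ LinearIndependent E w := by
      intro h
      have h1 := h.fintype_card_le_finrank
      have h2 := (hfr (r * (d * P * T2 + C0 d P) + (d * P * T1 + C0 d P))).2
      simp only [Fintype.card_prod, Fintype.card_coe, B1, B2, box_card] at h1
      have h3 := h1.trans h2
      omega
    rw [Fintype.not_linearIndependent_iff] at hnli
    obtain ⟨g, hg, i, hi⟩ := hnli
    refine ⟨g, fun h => hi (by rw [h]; rfl), ?_⟩
    have := congrArg (Subtype.val) hg
    simpa [w] using this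
  have hbij : Function.Surjective (fun e : E => e ^ r) := by
    apply Finite.surjective_of_injective
    rw [hr]
    exact iterateFrobenius_inj E p l
  choose c' hc' using fun i => hbij (c i)
  simp only at hc'
  have hr0 : r ≠ 0 := by rw [hr]; exact pow_ne_zero _ hpp.ne_zero
  -- Step 2
  let D := (d * P * T2 + C0 d P) + r * (d * P * T1 + C0 d P)
  let h : (L × (pts → E)) := ∑ i : B1 × B2, c' i • (mon X Y Z i.2.1 * mon X Y Z i.1.1 ^ r)
  have hD : h ∈ AA E d P X Y Z D := by
    refine Submodule.sum_mem _ fun i _ => Submodule.smul_mem _ _ ?_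
    exact AA_mul d P X Y Z (mon_mem d P X Y Z _ (box_wt i.2.2 hd hP).le)
      (AA_pow d P X Y Z (mon_mem d P X Y Z _ (box_wt i.1.2 hd hP).le) r)
  have hne : h.1 ≠ 0 := by
    intro h0
    simp only [h, mon_mul_mon_pow] at h0
    rw [Prod.fst_sum] at h0
    simp only [Prod.smul_fst, hfst] at h0
    have := indep_mon ν d P x y z Finset.univ (fun i : B1 × B2 => (i.2.1 + r • i.1.1)) hc hx hν ?_ c' h0 hdP
    · apply hcne
      funext i
      rw [← hc' i, this i (Finset.mem_univ _), zero_pow hr0]; rfl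
    · rintro ⟨i1, i2⟩ - ⟨j1, j2⟩ - hij
      simp only [wt_add] at hij
      have hi2 : wt d P i2 < r := (box_wt i2.2 hd hP).trans_le hT2
      have hj2 : wt d P j2 < r := (box_wt j2.2 hd hP).trans_le hT2
      have e1 : wt d P i2 = wt d P j2 := by
        have := congrArg (· % r) hij
        simpa [Nat.mod_eq_of_lt hi2, Nat.mod_eq_of_lt hj2] using this
      have e2 : wt d P i1 = wt d P j1 := by
        rw [e1] at hij
        exact Nat.eq_of_mul_eq_mul_left (Nat.pos_of_ne_zero hr0) (Nat.add_left_cancel hij)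
      exact Prod.ext (Subtype.ext (box_inj hcop i1.2 j1.2 e2)) (Subtype.ext (box_inj hcop i2.2 j2.2 e1))
  -- Step 3
  have hvan : h.2 = 0 := by
    have hsq : ∀ w : (L × (pts → E)), (w ^ (r * r)).2 = w.2 := by
      intro w
      funext t
      rw [← sq, ← hE]
      simp [FiniteField.pow_card]
    have h1 : (h ^ r).2 = 0 := by
      have : (h ^ r).2 = (∑ i, c i • (mon X Y Z i.2.1 ^ r * mon X Y Z i.1.1)).2 := by
        simp only [h]
        rw [show (∑ i : B1 × B2, c' i • (mon X Y Z i.2.1 * mon X Y Z i.1.1 ^ r)) ^ r =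
          ∑ i : B1 × B2, (c' i • (mon X Y Z i.2.1 * mon X Y Z i.1.1 ^ r)) ^ r from hfrob _ _]
        rw [Prod.snd_sum, Prod.snd_sum]
        refine Finset.sum_congr rfl fun i _ => ?_
        rw [_root_.smul_pow, hc', mul_pow, ← pow_mul]
        rw [Prod.smul_snd, Prod.snd_mul, hsq, Prod.smul_snd, Prod.snd_mul]
      rw [this, hc0]; rfl
    funext t
    have := congrFun h1 t
    simpa [hr0] using this
  -- Step 4
  let q1 := Fintype.card E - 1
  let W0 := 3 * (q1 * wt d P (1, 1, 1))
  let T := W0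
  let N0 := D + (d * P * T + C0 d P)
  have hN0 : W0 ≤ N0 := by
    have : W0 ≤ d * P * W0 := Nat.le_mul_of_pos_left _ (Nat.pos_of_ne_zero hdP)
    simp only [N0, T]; omega
  let A := AA E d P X Y Z N0
  have hfin : FiniteDimensional E A := (hfr N0).1
  let ev : A →ₗ[E] (pts → E) := (LinearMap.snd E L (pts → E)).comp A.subtype
  have hsurj : LinearMap.range ev = ⊤ := by
    rw [eq_top_iff, ← (Pi.basisFun E pts).span_eq, Submodule.span_le]
    rintro _ ⟨t, rfl⟩
    have hlin : ∀ (G : (L × (pts → E))) (e : E), G ∈ AA E d P X Y Z (wt d P (1,1,1)) →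
        1 - (G - algebraMap E (L × (pts → E)) e) ^ q1 ∈ AA E d P X Y Z (q1 * wt d P (1,1,1)) := by
      intro G e hG
      refine sub_mem (AA_one _ _ _ _ _) (AA_pow _ _ _ _ _ (sub_mem hG ?_) _)
      rw [Algebra.algebraMap_eq_smul_one]
      exact Submodule.smul_mem _ _ (AA_one _ _ _ _ _)
    have hXm : X ∈ AA E d P X Y Z (wt d P (1,1,1)) := by
      have := mon_mem (E := E) d P X Y Z (M := wt d P (1,1,1)) (1,0,0) (by simp [wt]; omega)
      simpa [mon] using this
    have hYm : Y ∈ AA E d P X Y Z (wt d P (1,1,1)) := by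
      have := mon_mem (E := E) d P X Y Z (M := wt d P (1,1,1)) (0,1,0) (by simp [wt]; omega)
      simpa [mon] using this
    have hZm : Z ∈ AA E d P X Y Z (wt d P (1,1,1)) := by
      have := mon_mem (E := E) d P X Y Z (M := wt d P (1,1,1)) (0,0,1) (by simp [wt])
      simpa [mon] using this
    let G : (L × (pts → E)) := (1 - (X - algebraMap E (L × (pts → E)) (X.2 t)) ^ q1) * (1 - (Y - algebraMap E (L × (pts → E)) (Y.2 t)) ^ q1) *
      (1 - (Z - algebraMap E (L × (pts → E)) (Z.2 t)) ^ q1)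
    have hG : G ∈ A := by
      refine AA_mono d P X Y Z hN0 ?_
      have := AA_mul d P X Y Z (AA_mul d P X Y Z (hlin X (X.2 t) hXm) (hlin Y (Y.2 t) hYm)) (hlin Z (Z.2 t) hZm)
      convert this using 2
      simp only [W0]; ring
    refine ⟨⟨G, hG⟩, ?_⟩
    have hq1 : q1 ≠ 0 := by
      have : 1 < Fintype.card E := Fintype.one_lt_card
      simp only [q1]; omega
    funext t'
    show G.2 t' = _
    simp only [G, Prod.snd_mul, Prod.snd_sub, Prod.pow_snd, Prod.snd_one, Pi.mul_apply, Pi.sub_apply, Pi.one_apply, Pi.pow_apply]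
    have hal : ∀ e : E, (algebraMap E (L × (pts → E)) e).2 t' = e := fun e => rfl
    simp only [hal, Pi.basisFun_apply]
    by_cases htt : t' = t
    · subst htt
      simp [hq1]
    · rw [Pi.single_eq_of_ne htt]
      have key : ∀ e f : E, e ≠ f → 1 - (e - f) ^ q1 = 0 := fun e f hef => by
        rw [FiniteField.pow_card_sub_one_eq_one _ (sub_ne_zero.2 hef), sub_self]
      by_cases h1 : X.2 t' = X.2 t
      · by_cases h2 : Y.2 t' = Y.2 t
        · by_cases h3 : Z.2 t' = Z.2 t
          · exfalso
            apply htt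
            have e0 := (hpts t.1 t.2).1
            simp only [X, Y, Z] at h1 h2 h3
            rw [h1] at h2 h3
            exact Subtype.ext (Prod.ext h1 (Prod.ext (mul_left_cancel₀ e0 h2) (mul_left_cancel₀ e0 h3)))
          · rw [key _ _ h3, mul_zero]
        · rw [key _ _ h2, mul_zero, zero_mul]
      · rw [key _ _ h1, zero_mul, zero_mul]
  let B := box d P T
  have hwB : ∀ i : B, h * mon X Y Z i.1 ∈ A := fun i =>
      AA_mul d P X Y Z hD (mon_mem d P X Y Z _ (box_wt i.2 hd hP).le)
  have hcount := dim_count A ev hsurj (fun i : B => h * mon X Y Z i.1) hwB (fun i => by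
    show (h * mon X Y Z i.1).2 = 0
    rw [Prod.snd_mul, hvan, zero_mul]) (fun g h1 i => by
    have h2 := congrArg Prod.fst h1
    rw [Prod.fst_sum] at h2
    simp only [Prod.smul_fst, Prod.fst_mul, hfst, Prod.fst_zero] at h2
    simp only [← mul_smul_comm] at h2
    rw [← Finset.mul_sum] at h2
    have h3 := (mul_eq_zero.1 h2).resolve_left hne
    exact indep_mon ν d P x y z Finset.univ (fun i : B => i.1) hc hx hν
      (fun i _ j _ hij => Subtype.ext (box_inj hcop i.2 j.2 hij)) g h3 hdP i (Finset.mem_univ _))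
  rw [Module.finrank_fintype_fun_eq_card, Fintype.card_coe] at hcount
  have hA := (hfr N0).2
  simp only [Fintype.card_coe, B, box_card] at hcount
  change Module.finrank E A ≤ _ at hA
  simp only [N0, D] at hA
  omega

end WB

namespace WB
universe uu

theorem curve_bound (E : Type uu) [Field E] [Fintype E] (d P : ℕ) (hd : 0 < d) (hP : 2 ≤ P)
    (hcop : Nat.Coprime d P) (a u v b : E) (ha : a ≠ 0) (hu : u ≠ 0)
    (p l r : ℕ) [Fact p.Prime] [CharP E p] (hr : r = p ^ l) (hE : Fintype.card E = r ^ 2)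
    (pts : Finset (E × E × E))
    (hpts : ∀ t ∈ pts, t.1 ≠ 0 ∧ t.2.1 ^ d = a * (t.1 + t.1⁻¹) ∧
      t.2.2 ^ P - t.2.2 = u * t.1 + v * t.1⁻¹ + b)
    (hbig : 4 * C0 d P + 2 * (d * P) + 8 ≤ r) :
    pts.card ≤ r ^ 2 + (4 * C0 d P + d * P + 8) * r := by
  have hg : 0 < d * P := by positivity
  obtain ⟨T2, hT2, hT2'⟩ : ∃ T2, d * P * T2 + C0 d P ≤ r ∧ r ≤ d * P * T2 + C0 d P + d * P := by
    refine ⟨(r - C0 d P) / (d * P), ?_, ?_⟩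
    · have := Nat.mul_div_le (r - C0 d P) (d * P)
      omega
    · have := Nat.lt_mul_div_succ (r - C0 d P) hg
      rw [mul_add] at this
      omega
  obtain ⟨T1, hT1, hT1'⟩ : ∃ T1, r + 2 * C0 d P + 6 ≤ d * P * T1 ∧
      d * P * T1 ≤ r + 2 * C0 d P + 6 + d * P := by
    refine ⟨(r + 2 * C0 d P + 6) / (d * P) + 1, ?_, ?_⟩
    · have := Nat.lt_mul_div_succ (r + 2 * C0 d P + 6) hg
      omega
    · have := Nat.mul_div_le (r + 2 * C0 d P + 6) (d * P)
      rw [mul_add]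
      omega
  refine (curve_bound_param E d P hd hP hcop a u v b ha hu p l r hr hE pts hpts T1 T2 hT2 ?_).trans ?_
  · generalize C0 d P = c at *
    generalize d * P * T2 = A at *
    generalize d * P * T1 = B at *
    generalize d * P = g at *
    obtain ⟨B', rfl⟩ := Nat.exists_eq_add_of_le hT1
    have h2 : r ≤ 2 * A := by omega
    nlinarith [Nat.mul_le_mul h2 (le_refl (2 * c + 6 + B')), Nat.zero_le (r * B'), Nat.zero_le (A * B')]
  · generalize C0 d P = c at *
    generalize d * P * T2 = A at *
    generalize d * P * T1 = B at *
    generalize d * P = g at *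
    nlinarith [Nat.mul_le_mul (le_refl r) hT1', Nat.mul_le_mul (le_refl c) (show 1 ≤ r by omega)]
end WB

namespace WB
universe uu
section
variable (K E : Type*) [Field K] [Fintype K] [Field E] [Fintype E] [Algebra K E]

theorem fixed_of_pow_card (x : E) (hx : x ^ Fintype.card K = x) : ∃ c : K, algebraMap K E c = x := by
  have := (IsGalois.mem_range_algebraMap_iff_fixed (F := K) x).2 (fun g => by
    obtain ⟨i, rfl⟩ := (FiniteField.bijective_frobeniusAlgEquivOfAlgebraic_pow K E).2 g
    have : ∀ j : ℕ, (FiniteField.frobeniusAlgEquivOfAlgebraic K E ^ j) x = x := by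
      intro j
      induction j with
      | zero => simp
      | succ j ih => rw [pow_succ, AlgEquiv.mul_apply]; simpa [hx] using ih
    exact this _)
  exact this

theorem mulH90 (x : E) (hx : Algebra.norm K x = 1) : ∃ y : E, y ≠ 0 ∧ y ^ (Fintype.card K - 1) = x := by
  have hx0 : x ≠ 0 := by
    rintro rfl
    simp at hx
  have h1 := FiniteField.algebraMap_norm_eq_pow (K := K) (x := x)
  rw [hx, map_one] at h1
  obtain ⟨g, hg⟩ := IsCyclic.exists_generator (α := Eˣ)
  obtain ⟨j, hj⟩ := Submonoid.mem_powers_iff _ _ |>.1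
    ((mem_powers_iff_mem_zpowers).2 (hg (Units.mk0 x hx0)))
  have hdvd : Nat.card K - 1 ∣ Nat.card E - 1 := by
    rw [Module.natCard_eq_pow_finrank (K := K) (V := E)]
    exact Nat.sub_one_dvd_pow_sub_one _ _
  have ho : orderOf g = Nat.card E - 1 := by
    rw [orderOf_eq_card_of_forall_mem_zpowers hg, Nat.card_units]
  have hK : 1 < Nat.card K := Finite.one_lt_card
  have hEc : 1 < Nat.card E := Finite.one_lt_card
  have h2 : g ^ (j * ((Nat.card E - 1) / (Nat.card K - 1))) = 1 := by
    rw [pow_mul, hj]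
    ext
    simpa using h1.symm
  have h3 := orderOf_dvd_of_pow_eq_one h2
  obtain ⟨M, hM⟩ := hdvd
  rw [ho, hM, Nat.mul_div_cancel_left _ (by omega)] at h3
  have hM0 : 0 < M := by
    rcases Nat.eq_zero_or_pos M with h | h
    · rw [h] at hM; omega
    · exact h
  obtain ⟨i, rfl⟩ := Nat.dvd_of_mul_dvd_mul_right hM0 h3
  refine ⟨((g ^ i : Eˣ) : E), Units.ne_zero _, ?_⟩
  have := congrArg Units.val hj
  rw [mul_comm, pow_mul] at this
  simpa [Nat.card_eq_fintype_card] using this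

theorem addH90 (x : E) (hx : Algebra.trace K E x = 0) : ∃ z : E, z ^ Fintype.card K - z = x := by
  set φ : E →ₗ[K] E := (FiniteField.frobeniusAlgEquivOfAlgebraic K E).toLinearMap - LinearMap.id with hφ
  have hφa : ∀ z, φ z = z ^ Fintype.card K - z := fun z => by simp [hφ]
  have hker : LinearMap.ker φ = LinearMap.range (Algebra.linearMap K E) := by
    ext z
    simp only [LinearMap.mem_ker, hφa, LinearMap.mem_range, Algebra.linearMap_apply]
    constructor
    · intro h
      exact fixed_of_pow_card K E z (sub_eq_zero.1 h)
    · rintro ⟨c, rfl⟩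
      rw [← map_pow, FiniteField.pow_card, sub_self]
  have h1 : Module.finrank K (LinearMap.ker φ) = 1 := by
    rw [hker, LinearMap.finrank_range_of_inj (algebraMap K E).injective, Module.finrank_self]
  have h2 := LinearMap.finrank_range_add_finrank_ker φ
  have h3 := LinearMap.finrank_range_add_finrank_ker (Algebra.trace K E)
  have h4 : Module.finrank K (LinearMap.range (Algebra.trace K E)) = 1 := by
    rw [LinearMap.range_eq_top.2 (Algebra.trace_surjective K E), finrank_top, Module.finrank_self]
  have hle : LinearMap.range φ ≤ LinearMap.ker (Algebra.trace K E) := by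
    rintro _ ⟨z, rfl⟩
    rw [LinearMap.mem_ker]
    simp only [hφ, LinearMap.sub_apply, map_sub, LinearMap.id_apply, AlgEquiv.toLinearMap_apply]
    rw [Algebra.trace_eq_of_algEquiv, sub_self]
  have := Submodule.eq_of_le_of_finrank_eq hle (by omega)
  have hx' : x ∈ LinearMap.range φ := by rw [this]; exact hx
  obtain ⟨z, hz⟩ := hx'
  exact ⟨z, by rw [← hφa, hz]⟩
end
end WB

namespace WB
section
variable (K : Type*) (E : Type*) [Field K] [Fintype K] [Field E] [Fintype E] [Algebra K E]

open Classical in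
/-- the class set -/
noncomputable def cls (u v : E) (α β : K) : Finset E :=
  Finset.univ.filter fun x => x ≠ 0 ∧ Algebra.norm K (x + x⁻¹) = α ∧
    Algebra.trace K E (u * x + v * x⁻¹) = β

def CC (Q : ℕ) : ℕ := 4 * C0 (Q-1) Q + 2 * ((Q-1) * Q) + 8

theorem class_count (l : ℕ) (hE : Fintype.card E = (Fintype.card K ^ l) ^ 2)
    (hbig : CC (Fintype.card K) ≤ Fintype.card K ^ l) (u v : E) (hu : u ≠ 0) (α β : K) (hα : α ≠ 0) :
    (cls K E u v α β).card * ((Fintype.card K - 1) * Fintype.card K) ≤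
      (Fintype.card K ^ l) ^ 2 + CC (Fintype.card K) * Fintype.card K ^ l := by
  classical
  set Q := Fintype.card K with hQ
  have hQ2 : 2 ≤ Q := Fintype.one_lt_card
  obtain ⟨p, hpc⟩ := CharP.exists K
  haveI := hpc
  obtain ⟨e, hp, hcard⟩ := FiniteField.card K p
  rw [← hQ] at hcard
  haveI : Fact p.Prime := ⟨hp⟩
  haveI : CharP E p := charP_of_injective_algebraMap (algebraMap K E).injective p
  obtain ⟨a, ha⟩ := FiniteField.norm_surjective K E α⁻¹
  obtain ⟨b, hb⟩ := Algebra.trace_surjective K E (-β)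
  have ha0 : a ≠ 0 := by
    rintro rfl
    rw [Algebra.norm_zero] at ha
    exact inv_ne_zero hα ha.symm
  have hy : ∀ x : E, ∃ y : E, x ∈ cls K E u v α β → y ≠ 0 ∧ y ^ (Q - 1) = a * (x + x⁻¹) := by
    intro x
    by_cases hx : x ∈ cls K E u v α β
    · simp only [cls, Finset.mem_filter] at hx
      obtain ⟨y, h⟩ := mulH90 K E (a * (x + x⁻¹)) (by
        rw [map_mul, ha, hx.2.2.1, inv_mul_cancel₀ hα])
      exact ⟨y, fun _ => h⟩
    · exact ⟨0, fun h => absurd h hx⟩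
  have hz : ∀ x : E, ∃ z : E, x ∈ cls K E u v α β → z ^ Q - z = u * x + v * x⁻¹ + b := by
    intro x
    by_cases hx : x ∈ cls K E u v α β
    · simp only [cls, Finset.mem_filter] at hx
      obtain ⟨y, h⟩ := addH90 K E (u * x + v * x⁻¹ + b) (by
        rw [map_add, hb, hx.2.2.2, add_neg_cancel])
      exact ⟨y, fun _ => h⟩
    · exact ⟨0, fun h => absurd h hx⟩
  choose y hy using hy
  choose z hz using hz
  set pts : Finset (E × E × E) := ((cls K E u v α β) ×ˢ (Finset.univ : Finset Kˣ) ×ˢ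
    (Finset.univ : Finset K)).image
    (fun w => (w.1, algebraMap K E w.2.1 * y w.1, z w.1 + algebraMap K E w.2.2)) with hpts
  have hc : pts.card = (cls K E u v α β).card * ((Q - 1) * Q) := by
    rw [hpts, Finset.card_image_of_injOn, Finset.card_product, Finset.card_product,
      Finset.card_univ, Finset.card_univ, Fintype.card_units]
    rintro ⟨x1, s1, t1⟩ h1 ⟨x2, s2, t2⟩ h2 h
    simp only [Prod.mk.injEq] at h
    obtain ⟨rfl, h3, h4⟩ := h
    have hx := (Finset.mem_product.1 (Finset.mem_coe.1 h1)).1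
    have h5 := (algebraMap K E).injective (mul_right_cancel₀ (hy _ hx).1 h3)
    have h6 := (algebraMap K E).injective (add_left_cancel h4)
    rw [Units.ext h5, h6]
  rw [← hc]
  have hQ1 : Nat.Coprime (Q - 1) Q := by
    have := Nat.coprime_self_add_right (m := Q - 1) (n := 1)
    rw [Nat.sub_add_cancel (by omega)] at this
    exact this.2 (Nat.coprime_one_right _)
  refine (curve_bound E (Q-1) Q (by omega) hQ2 hQ1 a u v b ha0 hu p (e * l) (Q ^ l)
    (by rw [hcard, pow_mul]) hE pts ?_ ?_).trans ?_
  · intro t ht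
    rw [hpts, Finset.mem_image] at ht
    obtain ⟨⟨x, s, c⟩, hw, rfl⟩ := ht
    have hx := (Finset.mem_product.1 hw).1
    have hx' := hx
    simp only [cls, Finset.mem_filter] at hx'
    refine ⟨hx'.2.1, ?_, ?_⟩
    · simp only
      rw [mul_pow, (hy _ hx).2, ← map_pow, FiniteField.pow_card_sub_one_eq_one _ s.ne_zero, map_one,
        one_mul]
    · simp only
      rw [← hz _ hx]
      have : (z x + algebraMap K E c) ^ Q = z x ^ Q + algebraMap K E c ^ Q := by
        rw [hcard]; exact add_pow_char_pow (p := p) (n := (e:ℕ)) (z x) (algebraMap K E c)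
      rw [this, ← map_pow, FiniteField.pow_card]
      ring
  · unfold CC at hbig; exact hbig
  · have : 4 * C0 (Q-1) Q + (Q-1) * Q + 8 ≤ CC Q := by unfold CC; omega
    gcongr
end
end WB

namespace WB
section
variable (K : Type*) (E : Type*) [Field K] [Fintype K] [Field E] [Fintype E] [Algebra K E]

theorem card_bad [DecidableEq E] : (Finset.univ.filter fun x : E => x + x⁻¹ = 0).card ≤ 3 := by
  classical
  have h1 : (Finset.univ.filter fun x : E => x + x⁻¹ = 0) ⊆ insert 0
      ((Polynomial.X ^ 2 + Polynomial.C (1:E)).roots.toFinset) := by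
    intro x hx
    rw [Finset.mem_filter] at hx
    by_cases h0 : x = 0
    · simp [h0]
    · refine Finset.mem_insert_of_mem ?_
      rw [Multiset.mem_toFinset, Polynomial.mem_roots (Polynomial.X_pow_add_C_ne_zero (by norm_num) _)]
      have := hx.2
      field_simp at this
      simpa using this
  refine (Finset.card_le_card h1).trans ((Finset.card_insert_le _ _).trans ?_)
  have h2 := Multiset.toFinset_card_le (Polynomial.X ^ 2 + Polynomial.C (1:E)).roots
  have h3 := Polynomial.card_roots' (Polynomial.X ^ 2 + Polynomial.C (1:E))
  rw [Polynomial.natDegree_X_pow_add_C] at h3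
  omega

theorem weight_bound (l : ℕ) (hE : Fintype.card E = (Fintype.card K ^ l) ^ 2)
    (hbig : CC (Fintype.card K) ≤ Fintype.card K ^ l) (u v : E) (hu : u ≠ 0)
    (w : K → K → ℂ) (hw1 : ∀ α β, ‖w α β‖ ≤ 1) (hw0 : ∀ β, w 0 β = 0)
    (hsum : ∑ α, ∑ β, w α β = 0) :
    ‖∑ x : E, w (Algebra.norm K (x + x⁻¹)) (Algebra.trace K E (u * x + v * x⁻¹))‖ ≤
      (CC (Fintype.card K) + 3) * (Fintype.card K : ℝ) ^ l := by
  classical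
  set Q := Fintype.card K with hQ
  have hQ2 : 2 ≤ Q := Fintype.one_lt_card
  set U : ℝ := (((Q:ℝ) ^ l) ^ 2 + CC Q * (Q:ℝ) ^ l) / ((Q - 1) * Q) with hU
  have hQr : (2:ℝ) ≤ Q := by exact_mod_cast hQ2
  have hpos : (0:ℝ) < (Q - 1) * Q := by nlinarith
  have hn : ∀ α β, α ≠ 0 → ((cls K E u v α β).card : ℝ) ≤ U := by
    intro α β hα
    rw [hU, le_div_iff₀ hpos]
    have := class_count K E l hE hbig u v hu α β hα
    rw [← hQ] at this
    have h2 : (((cls K E u v α β).card * ((Q - 1) * Q) : ℕ) : ℝ) ≤ (((Q ^ l) ^ 2 + CC Q * Q ^ l : ℕ) : ℝ) :=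
      by exact_mod_cast this
    push_cast [Nat.cast_sub (show 1 ≤ Q by omega)] at h2
    exact h2
  -- fiberwise
  set s : Finset E := Finset.univ.filter fun x => ¬ (x + x⁻¹ = 0) with hs
  set N : K × K → ℝ := fun t => ((cls K E u v t.1 t.2).card : ℝ)
  set I : Finset (K × K) := (Finset.univ.filter fun α : K => α ≠ 0) ×ˢ Finset.univ with hI
  have hmap : ∀ x ∈ s, ((Algebra.norm K (x + x⁻¹)), (Algebra.trace K E (u * x + v * x⁻¹))) ∈ I := by
    intro x hx
    simp only [hs, Finset.mem_filter, Finset.mem_univ, true_and] at hx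
    simp [hI, Algebra.norm_eq_zero_iff, hx]
  have hfib : ∀ t ∈ I, (s.filter fun x => ((Algebra.norm K (x + x⁻¹)), (Algebra.trace K E (u * x + v * x⁻¹))) = t)
      = cls K E u v t.1 t.2 := by
    rintro ⟨α, β⟩ ht
    simp only [hI, Finset.mem_product, Finset.mem_filter, Finset.mem_univ, true_and, and_true] at ht
    ext x
    simp only [hs, cls, Finset.mem_filter, Finset.mem_univ, true_and, Prod.mk.injEq]
    constructor
    · rintro ⟨h1, h2, h3⟩
      refine ⟨?_, h2, h3⟩
      rintro rfl
      simp at h1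
    · rintro ⟨h1, h2, h3⟩
      refine ⟨?_, h2, h3⟩
      intro h
      rw [h, Algebra.norm_zero] at h2
      exact ht h2.symm
  have h1 : ∑ x : E, w (Algebra.norm K (x + x⁻¹)) (Algebra.trace K E (u * x + v * x⁻¹)) =
      ∑ t ∈ I, (N t : ℂ) * w t.1 t.2 := by
    rw [← Finset.sum_filter_add_sum_filter_not Finset.univ (fun x : E => x + x⁻¹ = 0)]
    rw [Finset.sum_eq_zero (s := Finset.univ.filter (fun x : E => x + x⁻¹ = 0)), zero_add,
      ← Finset.sum_fiberwise_of_maps_to hmap]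
    · refine Finset.sum_congr rfl fun t ht => ?_
      rw [hfib t ht, Finset.sum_congr rfl (g := fun _ => w t.1 t.2), Finset.sum_const, nsmul_eq_mul]
      · simp [N]
      · intro x hx
        simp only [cls, Finset.mem_filter] at hx
        rw [hx.2.2.1, hx.2.2.2]
    · intro x hx
      rw [(Finset.mem_filter.1 hx).2, Algebra.norm_zero, hw0]
  have h2 : ∑ t ∈ I, w t.1 t.2 = 0 := by
    rw [hI, Finset.sum_product, ← hsum]
    refine Finset.sum_subset (Finset.filter_subset _ _) ?_
    intro α _ hα
    simp only [Finset.mem_filter, Finset.mem_univ, true_and, not_not] at hα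
    rw [hα]
    exact Finset.sum_eq_zero fun β _ => hw0 β
  have h3 : ((s.card : ℕ) : ℝ) = ∑ t ∈ I, N t := by
    rw [Finset.card_eq_sum_card_fiberwise (t := I) (f := fun x => ((Algebra.norm K (x + x⁻¹)), (Algebra.trace K E (u * x + v * x⁻¹)))) hmap]
    push_cast
    refine Finset.sum_congr rfl fun t ht => ?_
    rw [hfib t ht]
  have h4 : (((Q:ℝ) ^ l) ^ 2) - 3 ≤ s.card := by
    have a1 := Finset.card_filter_add_card_filter_not (s := (Finset.univ : Finset E)) (fun x : E => x + x⁻¹ = 0)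
    have a2 := card_bad E
    rw [Finset.card_univ, hE] at a1
    have a3 : (Q ^ l) ^ 2 ≤ s.card + 3 := by rw [hs]; omega
    have a4 : (((Q ^ l) ^ 2 : ℕ) : ℝ) ≤ ((s.card + 3 : ℕ) : ℝ) := by exact_mod_cast a3
    push_cast at a4
    linarith
  have hIc : (I.card : ℝ) = (Q - 1) * Q := by
    rw [hI, Finset.card_product, Finset.filter_ne', Finset.card_erase_of_mem (Finset.mem_univ _),
      Finset.card_univ, ← hQ]
    push_cast [Nat.cast_sub (show 1 ≤ Q by omega)]
    ring
  have h5 : ∑ t ∈ I, (N t : ℂ) * w t.1 t.2 = ∑ t ∈ I, ((N t - U : ℝ) : ℂ) * w t.1 t.2 := by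
    have : ∑ t ∈ I, ((N t - U : ℝ) : ℂ) * w t.1 t.2 = ∑ t ∈ I, (N t : ℂ) * w t.1 t.2 - U * ∑ t ∈ I, w t.1 t.2 := by
      rw [Finset.mul_sum, ← Finset.sum_sub_distrib]
      refine Finset.sum_congr rfl fun t _ => ?_
      push_cast; ring
    rw [this, h2, mul_zero, sub_zero]
  rw [h1, h5]
  have h6 : ‖∑ t ∈ I, ((N t - U : ℝ) : ℂ) * w t.1 t.2‖ ≤ ∑ t ∈ I, (U - N t) := by
    refine norm_sum_le_of_le _ fun t ht => ?_
    have : t.1 ≠ 0 := by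
      have := Finset.mem_product.1 ht
      exact (Finset.mem_filter.1 this.1).2
    have hle := hn t.1 t.2 this
    rw [norm_mul, Complex.norm_real, Real.norm_eq_abs, abs_of_nonpos (by simpa [N] using hle)]
    calc -(N t - U) * ‖w t.1 t.2‖ ≤ -(N t - U) * 1 :=
          mul_le_mul_of_nonneg_left (hw1 _ _) (by simpa [N] using hle)
      _ = U - N t := by ring
  refine h6.trans ?_
  rw [Finset.sum_sub_distrib, ← h3, Finset.sum_const, nsmul_eq_mul, hIc, hU, mul_div_cancel₀ _ hpos.ne']
  have h7 : (1:ℝ) ≤ (Q:ℝ) ^ l := one_le_pow₀ (by linarith)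
  nlinarith
end
end WB

namespace WB
section
variable (K : Type*) (E : Type*) [Field K] [Fintype K] [Field E] [Fintype E] [Algebra K E]

/-- the character sum over an extension -/
noncomputable def SE (χ : MulChar K ℂ) (ψ : AddChar K ℂ) (u v : K) : ℂ :=
  ∑ x : E, χ (Algebra.norm K (x + x⁻¹)) *
    ψ (Algebra.trace K E (algebraMap K E u * x + algebraMap K E v * x⁻¹))

theorem mulChar_norm_le_one (χ : MulChar K ℂ) (x : K) : ‖χ x‖ ≤ 1 := by
  by_cases h : x = 0
  · subst h; rw [MulChar.map_zero]; simp
  · have h1 : x ^ (Fintype.card K - 1) = 1 := FiniteField.pow_card_sub_one_eq_one x h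
    have h2 : (χ x) ^ (Fintype.card K - 1) = 1 := by rw [← map_pow, h1, map_one]
    refine (Complex.norm_eq_one_of_pow_eq_one h2 ?_).le
    have : 1 < Fintype.card K := Fintype.one_lt_card
    omega

theorem char_bound (l : ℕ) (hE : Fintype.card E = (Fintype.card K ^ l) ^ 2)
    (hbig : CC (Fintype.card K) ≤ Fintype.card K ^ l) (χ : MulChar K ℂ) (ψ : AddChar K ℂ) (hψ : ψ ≠ 1)
    (u v : K) (h : χ ≠ 1 ∨ u ≠ 0 ∨ v ≠ 0) :
    ‖SE K E χ ψ u v‖ ≤ (CC (Fintype.card K) + 3) * (Fintype.card K : ℝ) ^ l := by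
  have hψs : ∑ β, ψ β = 0 := AddChar.sum_eq_zero_of_ne_one hψ
  have hw : ∀ α β, ‖χ α * ψ β‖ ≤ 1 := by
    intro α β
    rw [norm_mul, AddChar.norm_apply, mul_one]
    exact mulChar_norm_le_one K χ α
  have hs : ∑ α, ∑ β, χ α * ψ β = 0 := by
    simp_rw [← Finset.mul_sum, hψs, mul_zero, Finset.sum_const_zero]
  have h0 : ∀ β, χ 0 * ψ β = 0 := fun β => by rw [MulChar.map_zero, zero_mul]
  by_cases hu : u = 0
  · by_cases hv : v = 0
    · have hχ : χ ≠ 1 := by simpa [hu, hv] using h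
      have := weight_bound K E l hE hbig 1 0 one_ne_zero (fun α _ => χ α)
        (fun α _ => mulChar_norm_le_one K χ α) (fun _ => MulChar.map_zero _)
        (by rw [Finset.sum_comm]; simp [MulChar.sum_eq_zero_of_ne_one hχ])
      simpa [SE, hu, hv] using this
    · have := weight_bound K E l hE hbig (algebraMap K E v) (algebraMap K E u) (by simpa using hv) _ hw h0 hs
      rw [← Equiv.sum_comp (Equiv.inv E)] at this
      simp only [Equiv.inv_apply, inv_inv] at this
      rw [SE]
      convert this using 6
      · rw [add_comm]
      · rw [add_comm]
  · exact weight_bound K E l hE hbig (algebraMap K E u) (algebraMap K E v) (by simpa using hu) _ hw h0 hs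
end
end WB

namespace WB
open Polynomial
section
variable {k : Type*} [Field k]

/-- The norm form `f(i) f(-i)`. -/
noncomputable def n2 (f : k[X]) : k :=
  (f %ₘ (X ^ 2 + C 1)).coeff 0 ^ 2 + (f %ₘ (X ^ 2 + C 1)).coeff 1 ^ 2

theorem monic_q : (X ^ 2 + C 1 : k[X]).Monic := monic_X_pow_add_C _ (by norm_num)

theorem n2_of (f q : k[X]) (α β : k) (h : f = (X ^ 2 + C 1) * q + (C β * X + C α)) :
    n2 f = α ^ 2 + β ^ 2 := by
  have h1 := (div_modByMonic_unique (f := f) q (C β * X + C α) (monic_q (k := k))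
    ⟨by rw [h]; ring, by
      rw [degree_X_pow_add_C (by norm_num)]
      exact degree_linear_lt⟩).2
  rw [n2, h1]
  simp

theorem n2_ex (f : k[X]) : ∃ (q : k[X]) (α β : k), f = (X ^ 2 + C 1) * q + (C β * X + C α) := by
  have h1 := modByMonic_add_div f (X ^ 2 + C 1 : k[X])
  have h2 := degree_modByMonic_lt f (monic_q (k := k))
  rw [degree_X_pow_add_C (by norm_num)] at h2
  have h3 : (f %ₘ (X ^ 2 + C 1)).degree ≤ 1 := by
    exact Order.le_of_lt_succ h2
  obtain ⟨β, α, h4⟩ := eq_X_add_C_of_degree_le_one h3 |> fun h => (⟨_, _, h⟩ : ∃ β α, f %ₘ (X ^ 2 + C 1) = C β * X + C α)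
  exact ⟨_, α, β, by rw [← h4, add_comm]; exact h1.symm⟩

theorem n2_mul (f g : k[X]) : n2 (f * g) = n2 f * n2 g := by
  obtain ⟨q, α, β, hf⟩ := n2_ex f
  obtain ⟨q', γ, δ, hg⟩ := n2_ex g
  rw [n2_of f q α β hf, n2_of g q' γ δ hg,
    n2_of (f * g) (q * ((X ^ 2 + C 1) * q' + (C δ * X + C γ)) + (C β * X + C α) * q' + C (β * δ))
      (α * γ - β * δ) (α * δ + β * γ)]
  · ring
  · rw [hf, hg]
    simp only [map_mul, map_sub, map_add]
    have : (C 1 : k[X]) = 1 := C_1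
    rw [this]
    ring

theorem n2_add (f g : k[X]) : n2 (f + (X ^ 2 + C 1) * g) = n2 f := by
  obtain ⟨q, α, β, hf⟩ := n2_ex f
  rw [n2_of f q α β hf, n2_of _ (q + g) α β]
  rw [hf]; ring

theorem n2_X_sub_C (θ : k) : n2 (X - C θ) = θ ^ 2 + 1 := by
  rw [n2_of _ 0 (-θ) 1]
  · ring
  · simp [sub_eq_add_neg]

theorem n2_one : n2 (1 : k[X]) = 1 := by
  rw [n2_of _ 0 1 0]
  · ring
  · simp

theorem n2_map {k' : Type*} [Field k'] (φ : k →+* k') (f : k[X]) : n2 (f.map φ) = φ (n2 f) := by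
  obtain ⟨q, α, β, hf⟩ := n2_ex f
  rw [n2_of f q α β hf, n2_of _ (q.map φ) (φ α) (φ β)]
  · simp
  · rw [hf]; simp

variable (χ : MulChar k ℂ) (ψ : AddChar k ℂ) (u v : k)

/-- The multiplicative weight. -/
noncomputable def Lam (f : k[X]) : ℂ :=
  χ (n2 f * ((-1) ^ f.natDegree * f.coeff 0)⁻¹) *
    ψ (u * (-f.nextCoeff) + v * (-(f.coeff 1 / f.coeff 0)))

theorem Lam_one : Lam χ ψ u v (1 : k[X]) = 1 := by
  have h : (1 : k[X]).coeff 1 = 0 := by simp [coeff_one]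
  have h2 : (1 : k[X]).nextCoeff = 0 := by simp [nextCoeff]
  simp [Lam, n2_one, h, h2]

theorem Lam_mul (f g : k[X]) (hf : f.Monic) (hg : g.Monic) :
    Lam χ ψ u v (f * g) = Lam χ ψ u v f * Lam χ ψ u v g := by
  unfold Lam
  rw [hf.natDegree_mul hg, n2_mul, mul_coeff_zero, hf.nextCoeff_mul hg, mul_coeff_one]
  by_cases hf0 : f.coeff 0 = 0
  · simp [hf0, MulChar.map_zero χ]
  by_cases hg0 : g.coeff 0 = 0
  · simp [hg0, MulChar.map_zero χ]
  have h1 : n2 f * n2 g * ((-1) ^ (f.natDegree + g.natDegree) * (f.coeff 0 * g.coeff 0))⁻¹ =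
    (n2 f * ((-1) ^ f.natDegree * f.coeff 0)⁻¹) * (n2 g * ((-1) ^ g.natDegree * g.coeff 0)⁻¹) := by
    rw [pow_add]
    field_simp
  have h2 : u * (-(f.nextCoeff + g.nextCoeff)) + v * (-((f.coeff 0 * g.coeff 1 + f.coeff 1 * g.coeff 0) / (f.coeff 0 * g.coeff 0)))
    = (u * (-f.nextCoeff) + v * (-(f.coeff 1 / f.coeff 0))) + (u * (-g.nextCoeff) + v * (-(g.coeff 1 / g.coeff 0))) := by
    field_simp
    ring
  rw [h1, h2, map_mul, AddChar.map_add_eq_mul]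
  ring

theorem Lam_pow (f : k[X]) (hf : f.Monic) (j : ℕ) :
    Lam χ ψ u v (f ^ j) = Lam χ ψ u v f ^ j := by
  induction j with
  | zero => simp [Lam_one]
  | succ j ih => rw [pow_succ, Lam_mul _ _ _ _ _ _ (hf.pow j) hf, ih, pow_succ]

/-- product of linear factors -/
theorem data_prod {ι : Type*} (s : Finset ι) (θ : ι → k) (hθ : ∀ i ∈ s, θ i ≠ 0) :
    n2 (∏ i ∈ s, (X - C (θ i))) = ∏ i ∈ s, (θ i ^ 2 + 1) ∧
    (∏ i ∈ s, (X - C (θ i))).natDegree = s.card ∧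
    (-1) ^ s.card * (∏ i ∈ s, (X - C (θ i))).coeff 0 = ∏ i ∈ s, θ i ∧
    -(∏ i ∈ s, (X - C (θ i))).nextCoeff = ∑ i ∈ s, θ i ∧
    -((∏ i ∈ s, (X - C (θ i))).coeff 1 / (∏ i ∈ s, (X - C (θ i))).coeff 0) = ∑ i ∈ s, (θ i)⁻¹ := by
  classical
  induction s using Finset.induction_on with
  | empty => simp [n2_one, coeff_one, nextCoeff]
  | insert i s hi ih =>
    obtain ⟨h1, h2, h3, h4, h5⟩ := ih (fun j hj => hθ j (Finset.mem_insert_of_mem hj))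
    have hm : (∏ i ∈ s, (X - C (θ i))).Monic := monic_prod_of_monic _ _ fun j _ => monic_X_sub_C _
    have hm0 : (∏ i ∈ s, (X - C (θ i))).coeff 0 ≠ 0 := by
      intro h
      rw [h, mul_zero] at h3
      exact Finset.prod_ne_zero_iff.2 (fun j hj => hθ j (Finset.mem_insert_of_mem hj)) h3.symm
    have hi0 := hθ i (Finset.mem_insert_self _ _)
    rw [Finset.prod_insert hi, Finset.prod_insert hi, Finset.prod_insert hi, Finset.sum_insert hi,
      Finset.sum_insert hi, Finset.card_insert_of_notMem hi]
    refine ⟨by rw [n2_mul, n2_X_sub_C, h1], ?_, ?_, ?_, ?_⟩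
    · rw [(monic_X_sub_C _).natDegree_mul hm, natDegree_X_sub_C, h2, add_comm]
    · rw [mul_coeff_zero, ← h3]
      simp; ring
    · rw [(monic_X_sub_C _).nextCoeff_mul hm, ← h4, nextCoeff_X_sub_C]; ring
    · rw [mul_coeff_one, mul_coeff_zero, ← h5]
      simp
      field_simp
      ring
end
end WB

namespace WB
open Polynomial
section
variable (K : Type*) (E : Type*) [Field K] [Fintype K] [Field E] [Fintype E] [Algebra K E]

theorem eq_pow_minpoly (P : K[X]) : ∀ (n : ℕ) (F : K[X]), F.natDegree = n → F.Monic →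
    (F.map (algebraMap K E)).Splits →
    (∀ y : E, aeval y F = 0 → minpoly K y = P) → ∃ j, F = P ^ j := by
  intro n
  induction n using Nat.strong_induction_on with
  | _ n ih =>
    intro F hn hF hs hr
    by_cases h0 : F.natDegree = 0
    · exact ⟨0, by rw [pow_zero]; exact hF.natDegree_eq_zero.1 h0⟩
    · have hd : (F.map (algebraMap K E)).degree ≠ 0 := by
        rw [degree_map]
        intro h
        exact h0 (natDegree_eq_of_degree_eq_some h)
      obtain ⟨y, hy⟩ := hs.exists_eval_eq_zero hd
      have hy' : aeval y F = 0 := by rwa [aeval_def, ← eval_map]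
      have hP := hr y hy'
      have hPm : P.Monic := hP ▸ minpoly.monic (Algebra.IsIntegral.isIntegral y)
      have hPd : 0 < P.natDegree := hP ▸ minpoly.natDegree_pos (Algebra.IsIntegral.isIntegral y)
      obtain ⟨G, hG⟩ : P ∣ F := hP ▸ minpoly.dvd K y hy'
      have hGm : G.Monic := hPm.of_mul_monic_left (hG ▸ hF)
      have hdeg : F.natDegree = P.natDegree + G.natDegree := by rw [hG, hPm.natDegree_mul hGm]
      obtain ⟨j, hj⟩ := ih G.natDegree (by omega) G rfl hGm
        (Splits.of_dvd hs (by exact (hF.map _).ne_zero) (Polynomial.map_dvd _ ⟨P, by rw [hG, mul_comm]⟩))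
        (fun z hz => hr z (by rw [hG, map_mul, hz, mul_zero]))
      exact ⟨j + 1, by rw [hG, hj, pow_succ, mul_comm]⟩

theorem exists_charpoly (x : E) : ∃ F : K[X], F.Monic ∧
    F.map (algebraMap K E) = ∏ g : Gal(E/K), (X - C (g x)) ∧
    F = (minpoly K x) ^ (Module.finrank K E / (minpoly K x).natDegree) ∧
    (minpoly K x).natDegree ∣ Module.finrank K E := by
  obtain ⟨F, hF1, -, hF2⟩ := Polynomial.lifts_and_natDegree_eq_and_monic
    (Algebra.IsInvariant.charpoly_mem_lifts K E Gal(E/K) x) (MulSemiringAction.monic_charpoly Gal(E/K) x)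
  rw [MulSemiringAction.charpoly_eq] at hF1
  have hF1' : F.map (algebraMap K E) = ∏ g : Gal(E/K), (X - C (g x)) := hF1
  refine ⟨F, hF2, hF1, ?_⟩
  obtain ⟨j, hj⟩ := eq_pow_minpoly K E (minpoly K x) _ F rfl hF2
    (by rw [hF1]; exact MulSemiringAction.splits_charpoly (G := Gal(E/K)) x) (by
      intro y hy
      rw [aeval_def, ← eval_map, hF1', eval_prod, Finset.prod_eq_zero_iff] at hy
      obtain ⟨g, -, hg⟩ := hy
      simp only [eval_sub, eval_X, eval_C, sub_eq_zero] at hg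
      rw [hg]
      exact minpoly.algEquiv_eq g x)
  have hdeg : F.natDegree = Module.finrank K E := by
    rw [← natDegree_map (algebraMap K E), hF1', natDegree_prod_of_monic _ _ (fun g _ => monic_X_sub_C _)]
    simp [IsGalois.card_aut_eq_finrank, ← Nat.card_eq_fintype_card]
  have hPd : 0 < (minpoly K x).natDegree := minpoly.natDegree_pos (Algebra.IsIntegral.isIntegral x)
  rw [hj, natDegree_pow] at hdeg
  rw [← hdeg, Nat.mul_div_cancel _ hPd]
  exact ⟨hj, Dvd.intro_left _ rfl⟩

theorem lam_eq (χ : MulChar K ℂ) (ψ : AddChar K ℂ) (u v : K) (x : E) :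
    χ (Algebra.norm K (x + x⁻¹)) *
      ψ (Algebra.trace K E (algebraMap K E u * x + algebraMap K E v * x⁻¹)) =
    Lam χ ψ u v (minpoly K x) ^ (Module.finrank K E / (minpoly K x).natDegree) := by
  obtain ⟨F, hF, hmap, hpow, hdvd⟩ := exists_charpoly K E x
  have hinj := (algebraMap K E).injective
  by_cases hx : x = 0
  · subst hx
    rw [minpoly.zero, natDegree_X]
    have : Module.finrank K E ≠ 0 := Module.finrank_pos.ne'
    simp [Lam, this, MulChar.map_zero χ]
  · rw [← Lam_pow _ _ _ _ _ (minpoly.monic (Algebra.IsIntegral.isIntegral x)), ← hpow, Lam]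
    obtain ⟨h1, h2, h3, h4, h5⟩ := data_prod (Finset.univ : Finset Gal(E/K)) (fun g => g x)
      (fun g _ => by simpa using hx)
    rw [← hmap] at h1 h2 h3 h4 h5
    rw [← h2, natDegree_map, coeff_map] at h3
    rw [n2_map] at h1
    rw [nextCoeff_map hinj] at h4
    rw [coeff_map, coeff_map] at h5
    have e1 : n2 F = Algebra.norm K (x ^ 2 + 1) := by
      apply hinj
      rw [h1, Algebra.norm_eq_prod_automorphisms]
      simp
    have e2 : (-1) ^ F.natDegree * F.coeff 0 = Algebra.norm K x := by
      apply hinj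
      rw [Algebra.norm_eq_prod_automorphisms, ← h3]
      simp
    have e3 : -F.nextCoeff = Algebra.trace K E x := by
      apply hinj
      rw [trace_eq_sum_automorphisms, ← h4]
      simp
    have e4 : -(F.coeff 1 / F.coeff 0) = Algebra.trace K E x⁻¹ := by
      apply hinj
      rw [trace_eq_sum_automorphisms]
      simp only [map_inv₀]
      rw [← h5]
      simp
    rw [e1, e2, e3, e4, ← Algebra.norm_inv, ← map_mul]
    congr 2
    · congr 2
      field_simp
    · rw [map_add, ← Algebra.smul_def, ← Algebra.smul_def, map_smul, map_smul, smul_eq_mul, smul_eq_mul]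
end
end WB

namespace WB
open Polynomial
section
variable (K : Type*) (E : Type*) [Field K] [Fintype K] [Field E] [Fintype E] [Algebra K E]

open Classical in
/-- monic polynomials of degree `D` -/
noncomputable def MD (D : ℕ) : Finset K[X] :=
  (Finset.univ : Finset (Fin D → K)).image fun c => X ^ D + ∑ i : Fin D, C (c i) * X ^ (i : ℕ)

theorem mem_MD (D : ℕ) (f : K[X]) : f ∈ MD K D ↔ f.Monic ∧ f.natDegree = D := by
  classical
  simp only [MD, Finset.mem_image, Finset.mem_univ, true_and]
  constructor
  · rintro ⟨c, rfl⟩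
    have h : (∑ i : Fin D, C (c i) * X ^ (i : ℕ)).degree < (D : WithBot ℕ) := degree_sum_fin_lt c
    refine ⟨monic_X_pow_add h, ?_⟩
    rw [natDegree_add_eq_left_of_degree_lt (by rwa [degree_X_pow]), natDegree_X_pow]
  · rintro ⟨h1, rfl⟩
    refine ⟨fun i => f.coeff i, ?_⟩
    conv_rhs => rw [h1.as_sum]
    rw [Finset.sum_range]

open Classical in
/-- monic irreducibles of degree `≤ D` -/
noncomputable def ID (D : ℕ) : Finset K[X] :=
  ((Finset.Icc 1 D).biUnion fun e => MD K e).filter Irreducible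

theorem mem_ID (D : ℕ) (f : K[X]) : f ∈ ID K D ↔ f.Monic ∧ Irreducible f ∧ f.natDegree ≤ D := by
  classical
  simp only [ID, Finset.mem_filter, Finset.mem_biUnion, Finset.mem_Icc, mem_MD]
  constructor
  · rintro ⟨⟨e, h1, h2, h3⟩, h4⟩
    exact ⟨h2, h4, by omega⟩
  · rintro ⟨h1, h2, h3⟩
    exact ⟨⟨_, ⟨h2.natDegree_pos, h3⟩, h1, rfl⟩, h2⟩

theorem card_minpoly [DecidableEq K[X]] (P : K[X]) (hP : P.Monic) (hi : Irreducible P)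
    (hd : P.natDegree ∣ Module.finrank K E) :
    (Finset.univ.filter fun x : E => minpoly K x = P).card = P.natDegree := by
  classical
  have hsep : P.Separable := PerfectField.separable_of_irreducible hi
  have hdvd : P ∣ X ^ (Nat.card K) ^ (Module.finrank K E) - X :=
    hi.natDegree_dvd_iff_dvd_X_pow_card_pow_sub_X.1 hd
  have hne : (X ^ (Nat.card K) ^ (Module.finrank K E) - X : K[X]) ≠ 0 :=
    FiniteField.X_pow_card_sub_X_ne_zero K (by
      exact Nat.one_lt_pow Module.finrank_pos.ne' Finite.one_lt_card)
  have hs : (P.map (algebraMap K E)).Splits := by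
    refine Splits.of_dvd ?_ ?_ (Polynomial.map_dvd _ hdvd)
    · have := (FiniteField.isSplittingField_sub E K).splits'
      rwa [← Nat.card_eq_fintype_card, Module.natCard_eq_pow_finrank (K := K) (V := E)] at this
    · exact (Polynomial.map_ne_zero_iff (algebraMap K E).injective).2 hne
  rw [← card_rootSet_eq_natDegree hsep hs, ← Fintype.card_subtype]
  refine Fintype.card_congr (Equiv.subtypeEquivRight fun x => ?_)
  rw [mem_rootSet]
  constructor
  · rintro rfl
    exact ⟨hP.ne_zero, minpoly.aeval K x⟩
  · rintro ⟨_, h⟩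
    exact (minpoly.eq_of_irreducible_of_monic hi h hP).symm

theorem SE_formula (χ : MulChar K ℂ) (ψ : AddChar K ℂ) (u v : K) (D : ℕ) (hD : Module.finrank K E ≤ D) :
    SE K E χ ψ u v = ∑ P ∈ ID K D, ∑ k ∈ Finset.Icc 1 D,
      if k * P.natDegree = Module.finrank K E then (P.natDegree : ℂ) * Lam χ ψ u v P ^ k else 0 := by
  classical
  have h1 : ∀ P ∈ ID K D, ∀ k, (if k * P.natDegree = Module.finrank K E then
      (P.natDegree : ℂ) * Lam χ ψ u v P ^ k else 0) =
      ∑ x : E, if minpoly K x = P then (if k * P.natDegree = Module.finrank K E then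
        Lam χ ψ u v P ^ k else 0) else 0 := by
    intro P hP k
    rw [mem_ID] at hP
    rw [← Finset.sum_filter, Finset.sum_const, nsmul_eq_mul]
    split_ifs with h
    · rw [card_minpoly K E P hP.1 hP.2.1 ⟨k, by rw [← h, mul_comm]⟩]
    · simp
  rw [Finset.sum_congr rfl fun P hP => Finset.sum_congr rfl fun k _ => h1 P hP k]
  rw [Finset.sum_congr rfl fun P hP => Finset.sum_comm, Finset.sum_comm]
  rw [SE]
  refine Finset.sum_congr rfl fun x _ => ?_
  have hIntg := Algebra.IsIntegral.isIntegral (R := K) x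
  have hpos := minpoly.natDegree_pos hIntg
  obtain ⟨_, -, -, -, c, hc⟩ := exists_charpoly K E x
  have hfr : 0 < Module.finrank K E := Module.finrank_pos
  have hc0 : 0 < c := by
    rcases Nat.eq_zero_or_pos c with h | h
    · rw [h] at hc; omega
    · exact h
  have hcle : c ≤ Module.finrank K E := by rw [hc]; exact Nat.le_mul_of_pos_left _ hpos
  have hple : (minpoly K x).natDegree ≤ Module.finrank K E := by
    conv_rhs => rw [hc]
    exact Nat.le_mul_of_pos_right _ hc0
  rw [lam_eq, Finset.sum_eq_single (minpoly K x), Finset.sum_eq_single c]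
  · rw [if_pos rfl, if_pos (by rw [mul_comm, ← hc]), hc, Nat.mul_div_cancel_left _ hpos]
  · intro k _ hk
    rw [if_pos rfl, if_neg]
    intro h
    rw [hc, mul_comm] at h
    exact hk (Nat.eq_of_mul_eq_mul_left hpos h)
  · intro h
    exact absurd (Finset.mem_Icc.2 ⟨hc0, hcle.trans hD⟩) h
  · intro P _ hP
    exact Finset.sum_eq_zero fun k _ => if_neg (Ne.symm hP)
  · intro h
    exact absurd ((mem_ID K D _).2 ⟨minpoly.monic hIntg, minpoly.irreducible hIntg, hple.trans hD⟩) h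
end
end WB

namespace WB
open Polynomial UniqueFactorizationMonoid
section
variable (K : Type*) [Field K] [Fintype K] 

open Classical in
theorem degree_formula (D : ℕ) (f : K[X]) (hf : f.Monic) (hD : f.natDegree = D) :
    ∑ P ∈ ID K D, ∑ k ∈ Finset.Icc 1 D, (if P ^ k ∣ f then P.natDegree else 0) = D := by
  have hcount : ∀ P ∈ ID K D, ∀ k, P ^ k ∣ f ↔ k ≤ (normalizedFactors f).count P := by
    intro P hP k
    rw [mem_ID] at hP
    rw [pow_dvd_iff_le_emultiplicity, emultiplicity_eq_count_normalizedFactors hP.2.1 hf.ne_zero,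
      hP.1.normalize_eq_self]
    norm_cast
  have h1 : ∀ P ∈ ID K D, ∑ k ∈ Finset.Icc 1 D, (if P ^ k ∣ f then P.natDegree else 0) =
      (normalizedFactors f).count P * P.natDegree := by
    intro P hP
    have h2 : (normalizedFactors f).count P ≤ D := by
      have h3 := (hcount P hP _).2 le_rfl
      have h4 := natDegree_le_of_dvd h3 hf.ne_zero
      rw [mem_ID] at hP
      rw [natDegree_pow, hD] at h4
      exact (Nat.le_mul_of_pos_right _ hP.2.1.natDegree_pos).trans h4
    rw [← Finset.sum_filter, Finset.sum_const, smul_eq_mul]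
    congr 1
    have : (Finset.Icc 1 D).filter (fun k => P ^ k ∣ f) = Finset.Icc 1 ((normalizedFactors f).count P) := by
      ext k
      rw [Finset.mem_filter, hcount P hP, Finset.mem_Icc, Finset.mem_Icc]
      omega
    rw [this, Nat.card_Icc]; omega
  rw [Finset.sum_congr rfl h1]
  have hmon : ∀ P ∈ normalizedFactors f, P.Monic := by
    intro P hP
    have h3 := normalize_normalized_factor P hP
    have h4 : P ≠ 0 := (irreducible_of_normalized_factor P hP).ne_zero
    rw [← h3]
    exact monic_normalize h4
  have h5 : (normalizedFactors f).prod = f := by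
    rw [prod_normalizedFactors_eq hf.ne_zero, hf.normalize_eq_self]
  have h6 : ((normalizedFactors f).map natDegree).sum = D := by
    rw [← natDegree_multiset_prod_of_monic _ hmon, h5, hD]
  rw [Finset.sum_multiset_map_count] at h6
  conv_rhs => rw [← h6]
  symm
  refine Finset.sum_subset ?_ ?_
  · intro P hP
    rw [Multiset.mem_toFinset] at hP
    rw [mem_ID]
    refine ⟨hmon P hP, irreducible_of_normalized_factor P hP, ?_⟩
    rw [← hD]
    exact natDegree_le_of_dvd (dvd_of_mem_normalizedFactors hP) hf.ne_zero
  · intro P _ hP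
    rw [Multiset.mem_toFinset] at hP
    simp [Multiset.count_eq_zero_of_notMem hP]

variable (χ : MulChar K ℂ) (ψ : AddChar K ℂ) (u v : K)

/-- coefficients of the L-function -/
noncomputable def cD (D : ℕ) : ℂ := ∑ f ∈ MD K D, Lam χ ψ u v f

/-- power sums as sums over prime powers -/
noncomputable def Sm (D m : ℕ) : ℂ := ∑ P ∈ ID K D, ∑ k ∈ Finset.Icc 1 D,
      if k * P.natDegree = m then (P.natDegree : ℂ) * Lam χ ψ u v P ^ k else 0

open Classical in
theorem sum_dvd (D : ℕ) (g : K[X]) (hg : g.Monic) (hgD : g.natDegree ≤ D) :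
    ∑ f ∈ (MD K D).filter (fun f => g ∣ f), Lam χ ψ u v f =
      Lam χ ψ u v g * cD K χ ψ u v (D - g.natDegree) := by
  rw [cD, Finset.mul_sum]
  symm
  refine Finset.sum_bij (fun h _ => g * h) ?_ ?_ ?_ ?_
  · intro h hh
    rw [mem_MD] at hh
    rw [Finset.mem_filter, mem_MD, hg.natDegree_mul hh.1]
    exact ⟨⟨hg.mul hh.1, by omega⟩, dvd_mul_right _ _⟩
  · intro a _ b _ hab
    exact mul_left_cancel₀ hg.ne_zero hab
  · intro f hf
    rw [Finset.mem_filter, mem_MD] at hf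
    obtain ⟨⟨h1, h2⟩, h, rfl⟩ := hf
    have hm : h.Monic := hg.of_mul_monic_left h1
    refine ⟨h, ?_, rfl⟩
    rw [mem_MD]
    rw [hg.natDegree_mul hm] at h2
    exact ⟨hm, by omega⟩
  · intro h hh
    rw [mem_MD] at hh
    rw [Lam_mul _ _ _ _ _ _ hg hh.1]

theorem recurrence (D : ℕ) : (D : ℂ) * cD K χ ψ u v D =
    ∑ m ∈ Finset.Icc 1 D, Sm K χ ψ u v D m * cD K χ ψ u v (D - m) := by
  classical
  have h1 : (D : ℂ) * cD K χ ψ u v D = ∑ f ∈ MD K D, ∑ P ∈ ID K D, ∑ k ∈ Finset.Icc 1 D,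
      if P ^ k ∣ f then (P.natDegree : ℂ) * Lam χ ψ u v f else 0 := by
    rw [cD, Finset.mul_sum]
    refine Finset.sum_congr rfl fun f hf => ?_
    rw [mem_MD] at hf
    have := degree_formula K D f hf.1 hf.2
    conv_lhs => rw [← this]
    push_cast
    rw [Finset.sum_mul]
    refine Finset.sum_congr rfl fun P _ => ?_
    rw [Finset.sum_mul]
    refine Finset.sum_congr rfl fun k _ => ?_
    rw [ite_mul, zero_mul]
  rw [h1, Finset.sum_comm]
  simp only [Sm, Finset.sum_mul]
  refine Eq.trans ?_ Finset.sum_comm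
  refine Finset.sum_congr rfl fun P hP => ?_
  refine Eq.trans Finset.sum_comm (Eq.trans ?_ Finset.sum_comm)
  refine Finset.sum_congr rfl fun k hk => ?_
  rw [mem_ID] at hP
  rw [Finset.mem_Icc] at hk
  have hpos := hP.2.1.natDegree_pos
  have hkpos : 0 < k * P.natDegree := Nat.mul_pos hk.1 hpos
  rw [← Finset.sum_filter, ← Finset.mul_sum]
  by_cases hle : k * P.natDegree ≤ D
  · rw [sum_dvd K χ ψ u v D (P ^ k) (hP.1.pow k) (by rw [natDegree_pow]; exact hle)]
    rw [Finset.sum_eq_single (k * P.natDegree)]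
    · rw [if_pos rfl, natDegree_pow, Lam_pow _ _ _ _ _ hP.1]; ring
    · intro m _ hm
      rw [if_neg (Ne.symm hm), zero_mul]
    · intro h
      exact absurd (Finset.mem_Icc.2 ⟨hkpos, hle⟩) h
  · rw [Finset.filter_eq_empty_iff.2, Finset.sum_empty, mul_zero, Finset.sum_eq_zero]
    · intro m hm
      rw [Finset.mem_Icc] at hm
      rw [if_neg (by omega), zero_mul]
    · intro f hf hdvd
      rw [mem_MD] at hf
      have := natDegree_le_of_dvd hdvd hf.1.ne_zero
      rw [natDegree_pow, hf.2] at this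
      exact hle this
end
end WB

namespace WB
open Polynomial
section
variable (K : Type*) [Field K] [Fintype K] (χ : MulChar K ℂ) (ψ : AddChar K ℂ) (u v : K)

theorem cD_zero : cD K χ ψ u v 0 = 1 := by
  have : MD K 0 = {1} := by
    ext f
    rw [mem_MD, Finset.mem_singleton]
    constructor
    · rintro ⟨h1, h2⟩
      exact h1.natDegree_eq_zero.1 h2
    · rintro rfl
      exact ⟨monic_one, natDegree_one⟩
  rw [cD, this, Finset.sum_singleton, Lam_one]

theorem shift_zero (D : ℕ) (φ φ' : K[X] → K[X]) (h1 : ∀ f ∈ MD K D, φ f ∈ MD K D)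
    (h2 : ∀ f ∈ MD K D, φ' f ∈ MD K D) (h3 : ∀ f ∈ MD K D, φ' (φ f) = f)
    (h4 : ∀ f ∈ MD K D, φ (φ' f) = f) (c : ℂ) (hc : c ≠ 1)
    (h : ∀ f ∈ MD K D, Lam χ ψ u v (φ f) = c * Lam χ ψ u v f) : cD K χ ψ u v D = 0 := by
  have e : cD K χ ψ u v D = c * cD K χ ψ u v D := by
    conv_rhs => rw [cD, Finset.mul_sum]
    rw [cD]
    symm
    refine Finset.sum_nbij' φ φ' h1 h2 h3 h4 ?_
    intro f hf
    rw [h f hf]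
  have : (1 - c) * cD K χ ψ u v D = 0 := by rw [sub_mul, one_mul, ← e, sub_self]
  rcases mul_eq_zero.1 this with h | h
  · exact absurd (sub_eq_zero.1 h).symm hc
  · exact h

theorem mem_shift (D : ℕ) (f g : K[X]) (hf : f ∈ MD K D) (hg : g.degree < D) : f + g ∈ MD K D := by
  rw [mem_MD] at hf ⊢
  have h : g.degree < f.degree := by rwa [degree_eq_natDegree hf.1.ne_zero, hf.2]
  exact ⟨hf.1.add_of_left h, by rw [natDegree_add_eq_left_of_degree_lt h, hf.2]⟩

theorem deg_aux (D j : ℕ) (c : K) (hj : j + 2 < D) : ((X ^ 2 + C 1) * (C c * X ^ j) : K[X]).degree < D := by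
  by_cases hc : c = 0
  · simp [hc]
  · rw [degree_mul, degree_X_pow_add_C (by norm_num), degree_C_mul_X_pow _ hc]
    norm_cast
    omega

theorem coeff_aux (j i : ℕ) (c : K) : ((X ^ 2 + C 1) * (C c * X ^ j) : K[X]).coeff i =
    (if i = j + 2 then c else 0) + (if i = j then c else 0) := by
  have : ((X ^ 2 + C 1) * (C c * X ^ j) : K[X]) = C c * X ^ (j + 2) + C c * X ^ j := by
    rw [C_1]; ring
  rw [this, coeff_add, coeff_C_mul_X_pow, coeff_C_mul_X_pow]

theorem nextCoeff_MD (D : ℕ) (hD : 0 < D) (f : K[X]) (hf : f ∈ MD K D) : f.nextCoeff = f.coeff (D - 1) := by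
  rw [mem_MD] at hf
  rw [nextCoeff_of_natDegree_pos (by omega), hf.2]

theorem cD_vanish (hψ : ψ ≠ 1) (h : χ ≠ 1 ∨ u ≠ 0 ∨ v ≠ 0) (D : ℕ) (hD : 5 ≤ D) :
    cD K χ ψ u v D = 0 := by
  obtain ⟨t, ht⟩ : ∃ t, ψ t ≠ 1 := by
    by_contra hcon
    push Not at hcon
    exact hψ (DFunLike.ext _ _ fun x => by rw [hcon, AddChar.one_apply])
  by_cases hu : u = 0
  · by_cases hv : v = 0
    · have hχ : χ ≠ 1 := by simpa [hu, hv] using h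
      obtain ⟨s, hs⟩ : ∃ s : Kˣ, χ s ≠ 1 := by
        by_contra hcon
        push Not at hcon
        exact hχ (MulChar.ext fun x => by rw [hcon, MulChar.one_apply_coe])
      have hs0 : (s : K) ≠ 0 := s.ne_zero
      have key : ∀ f : K[X], ∀ c : K, (f + (X ^ 2 + C 1) * (C ((c - 1) * f.coeff 0) * X ^ 0)).coeff 0 = c * f.coeff 0 := by
        intro f c
        rw [coeff_add, coeff_aux]
        simp; ring
      refine shift_zero K χ ψ u v D (fun f => f + (X ^ 2 + C 1) * (C (((s:K)⁻¹ - 1) * f.coeff 0) * X ^ 0))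
        (fun f => f + (X ^ 2 + C 1) * (C (((s:K) - 1) * f.coeff 0) * X ^ 0)) ?_ ?_ ?_ ?_ (χ s) hs ?_
      · exact fun f hf => mem_shift K D _ _ hf (deg_aux K D 0 _ (by omega))
      · exact fun f hf => mem_shift K D _ _ hf (deg_aux K D 0 _ (by omega))
      · intro f hf
        simp only [key]
        rw [add_assoc, ← mul_add, ← add_mul, ← C_add]
        have : ((s:K)⁻¹ - 1) * f.coeff 0 + (s - 1) * ((s:K)⁻¹ * f.coeff 0) = 0 := by
          field_simp; ring
        rw [this]; simp
      · intro f hf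
        simp only [key]
        rw [add_assoc, ← mul_add, ← add_mul, ← C_add]
        have : ((s:K) - 1) * f.coeff 0 + ((s:K)⁻¹ - 1) * ((s:K) * f.coeff 0) = 0 := by
          field_simp; ring
        rw [this]; simp
      · intro f hf
        have hf' := mem_shift K D _ _ hf (deg_aux K D 0 (((s:K)⁻¹ - 1) * f.coeff 0) (by omega))
        simp only [Lam]
        rw [n2_add, key, ((mem_MD K D _).1 hf').2, ((mem_MD K D _).1 hf).2, hu, hv]
        simp only [zero_mul, add_zero, AddChar.map_zero_eq_one, mul_one]
        rw [← map_mul]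
        congr 1
        rw [mul_inv, mul_inv, mul_inv, inv_inv]
        ring
    · refine shift_zero K χ ψ u v D (fun f => f + (X ^ 2 + C 1) * (C ((-(t / v)) * f.coeff 0) * X ^ 1))
        (fun f => f + (X ^ 2 + C 1) * (C ((t / v) * f.coeff 0) * X ^ 1)) ?_ ?_ ?_ ?_ (ψ t) ht ?_
      · exact fun f hf => mem_shift K D _ _ hf (deg_aux K D 1 _ (by omega))
      · exact fun f hf => mem_shift K D _ _ hf (deg_aux K D 1 _ (by omega))
      · intro f hf
        simp only [coeff_add, coeff_aux]
        rw [add_assoc, ← mul_add, ← add_mul, ← C_add]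
        simp
      · intro f hf
        simp only [coeff_add, coeff_aux]
        rw [add_assoc, ← mul_add, ← add_mul, ← C_add]
        simp
      · intro f hf
        have hf' := mem_shift K D _ _ hf (deg_aux K D 1 ((-(t / v)) * f.coeff 0) (by omega))
        simp only [Lam]
        rw [n2_add, nextCoeff_MD K D (by omega) _ hf', nextCoeff_MD K D (by omega) _ hf,
          ((mem_MD K D _).1 hf').2, ((mem_MD K D _).1 hf).2]
        simp only [coeff_add, coeff_aux]
        rw [if_neg (by omega : ¬ (D - 1 = 1 + 2)), if_neg (by omega : ¬ (D - 1 = 1))]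
        norm_num
        by_cases h0 : f.coeff 0 = 0
        · simp [h0, MulChar.map_zero χ]
        · have : -(u * f.coeff (D - 1)) + -(v * ((f.coeff 1 + -(t / v * f.coeff 0)) / f.coeff 0)) =
            t + (-(u * f.coeff (D - 1)) + -(v * (f.coeff 1 / f.coeff 0))) := by
            field_simp
            ring
          rw [this, AddChar.map_add_eq_mul]
          ring
  · refine shift_zero K χ ψ u v D (fun f => f + (X ^ 2 + C 1) * (C (-(t / u)) * X ^ (D - 3)))
        (fun f => f + (X ^ 2 + C 1) * (C (t / u) * X ^ (D - 3))) ?_ ?_ ?_ ?_ (ψ t) ht ?_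
    · exact fun f hf => mem_shift K D _ _ hf (deg_aux K D (D-3) _ (by omega))
    · exact fun f hf => mem_shift K D _ _ hf (deg_aux K D (D-3) _ (by omega))
    · intro f hf
      rw [add_assoc, ← mul_add, ← add_mul, ← C_add]
      simp
    · intro f hf
      rw [add_assoc, ← mul_add, ← add_mul, ← C_add]
      simp
    · intro f hf
      have hf' := mem_shift K D _ _ hf (deg_aux K D (D-3) (-(t / u)) (by omega))
      simp only [Lam]
      rw [n2_add, nextCoeff_MD K D (by omega) _ hf', nextCoeff_MD K D (by omega) _ hf,
        ((mem_MD K D _).1 hf').2, ((mem_MD K D _).1 hf).2]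
      simp only [coeff_add, coeff_aux]
      rw [if_pos (by omega : D - 1 = D - 3 + 2), if_neg (by omega : ¬ (D - 1 = D - 3)),
        if_neg (by omega : ¬ (1 = D - 3 + 2)), if_neg (by omega : ¬ (1 = D - 3)),
        if_neg (by omega : ¬ (0 = D - 3 + 2)), if_neg (by omega : ¬ (0 = D - 3))]
      simp only [add_zero]
      have : u * -(f.coeff (D - 1) + -(t / u)) + v * -(f.coeff 1 / f.coeff 0) =
        t + (u * -(f.coeff (D - 1)) + v * -(f.coeff 1 / f.coeff 0)) := by
        field_simp
        ring
      rw [this, AddChar.map_add_eq_mul]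
      ring
end
end WB

namespace WB
section

theorem factor_one (n : ℕ) : ∀ p : Polynomial ℂ, p.natDegree ≤ n → p.coeff 0 = 1 →
    ∃ W : Multiset ℂ, Multiset.card W ≤ n ∧
      p = (W.map fun ω => (1 - Polynomial.C ω * Polynomial.X)).prod := by
  induction n with
  | zero =>
    intro p hp h0
    refine ⟨0, by simp, ?_⟩
    rw [Polynomial.eq_C_of_natDegree_le_zero hp, h0]
    simp
  | succ n ih =>
    intro p hp h0
    by_cases hd : p.natDegree = 0
    · obtain ⟨W, h1, h2⟩ := ih p (by omega) h0
      exact ⟨W, by omega, h2⟩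
    · obtain ⟨z, hz⟩ := IsAlgClosed.exists_root p (fun h => hd (Polynomial.natDegree_eq_of_degree_eq_some h))
      obtain ⟨q, hq⟩ := Polynomial.dvd_iff_isRoot.2 hz
      have hz0 : z ≠ 0 := by
        rintro rfl
        rw [Polynomial.IsRoot, ← Polynomial.coeff_zero_eq_eval_zero, h0] at hz
        exact one_ne_zero hz
      have hp0 : p ≠ 0 := by rintro rfl; simp at h0
      have hq0 : q ≠ 0 := by rintro rfl; rw [mul_zero] at hq; exact hp0 hq
      have hdeg : p.natDegree = 1 + q.natDegree := by
        rw [hq, Polynomial.natDegree_mul (Polynomial.X_sub_C_ne_zero z) hq0, Polynomial.natDegree_X_sub_C]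
      have hqc : -z * q.coeff 0 = 1 := by
        rw [← h0, hq, Polynomial.mul_coeff_zero]; simp
      obtain ⟨W, h1, h2⟩ := ih (Polynomial.C (-z) * q) (by
        rw [Polynomial.natDegree_C_mul (by simpa using hz0)]; omega) (by
        rw [Polynomial.coeff_C_mul, hqc])
      refine ⟨z⁻¹ ::ₘ W, by simp; omega, ?_⟩
      rw [Multiset.map_cons, Multiset.prod_cons, ← h2, hq]
      have : (Polynomial.C z⁻¹ * Polynomial.C z : Polynomial ℂ) = 1 := by
        rw [← Polynomial.C_mul, inv_mul_cancel₀ hz0, Polynomial.C_1]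
      simp only [map_neg]
      linear_combination (-Polynomial.X * q) * this

open PowerSeries in
theorem log_deriv (W : Multiset ℂ) :
    d⁄dX ℂ (W.map fun ω => (1 - C ω * X : ℂ⟦X⟧)).prod =
      -((W.map fun ω => (1 - C ω * X : ℂ⟦X⟧)).prod * PowerSeries.mk fun m => (W.map fun ω => ω ^ (m + 1)).sum) := by
  induction W using Multiset.induction_on with
  | empty =>
    have : (PowerSeries.mk fun m => ((0 : Multiset ℂ).map fun ω => ω ^ (m + 1)).sum) = 0 := by
      ext; simp
    rw [this]; simp
  | cons ω W ih =>
    have h1 : (PowerSeries.mk fun m => ((ω ::ₘ W).map fun ω => ω ^ (m + 1)).sum) =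
      (PowerSeries.mk fun m => ω ^ (m + 1)) + PowerSeries.mk fun m => (W.map fun ω => ω ^ (m + 1)).sum := by
      ext; simp
    have h2 : (1 - C ω * X : ℂ⟦X⟧) * (PowerSeries.mk fun m => ω ^ (m + 1)) = C ω := by
      ext m
      rw [sub_mul, one_mul, mul_assoc, map_sub, coeff_C_mul, coeff_C, coeff_mk]
      rcases m with _ | m
      · simp
      · rw [coeff_succ_X_mul, coeff_mk]; simp; ring
    have h3 : d⁄dX ℂ (1 - C ω * X : ℂ⟦X⟧) = - C ω := by
      rw [map_sub, Derivation.leibniz]; simp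
    rw [Multiset.map_cons, Multiset.prod_cons, h1, Derivation.leibniz, ih, h3]
    simp only [smul_eq_mul]
    linear_combination ((Multiset.map (fun ω => (1 - C ω * X : ℂ⟦X⟧)) W).prod) * h2

/-- power sums from the recurrence -/
theorem power_sums (c s : ℕ → ℂ) (hc0 : c 0 = 1) (hc : ∀ D : ℕ, 5 ≤ D → c D = 0)
    (hrec : ∀ D : ℕ, (D : ℂ) * c D = ∑ m ∈ Finset.Icc 1 D, s m * c (D - m)) :
    ∃ W : Multiset ℂ, Multiset.card W ≤ 4 ∧ ∀ m : ℕ, 1 ≤ m → s m = -(W.map fun ω => ω ^ m).sum := by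
  set p : Polynomial ℂ := ∑ i ∈ Finset.range 5, Polynomial.C (c i) * Polynomial.X ^ i with hp
  have hcoeff : ∀ i, p.coeff i = c i := by
    intro i
    rw [hp, Polynomial.finset_sum_coeff]
    simp only [Polynomial.coeff_C_mul_X_pow]
    rw [Finset.sum_ite_eq]
    split_ifs with h
    · rfl
    · rw [hc i (by simpa using h)]
  have hdeg : p.natDegree ≤ 4 := by
    rw [Polynomial.natDegree_le_iff_coeff_eq_zero]
    intro N hN
    rw [hcoeff, hc N (by omega)]
  obtain ⟨W, hW, hprod⟩ := factor_one 4 p hdeg (by rw [hcoeff, hc0])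
  refine ⟨W, hW, ?_⟩
  have hps : (p : PowerSeries ℂ) = (W.map fun ω => (1 - PowerSeries.C ω * PowerSeries.X : PowerSeries ℂ)).prod := by
    rw [hprod]
    have := map_multiset_prod (Polynomial.coeToPowerSeries.ringHom (R := ℂ)) (W.map fun ω => (1 - Polynomial.C ω * Polynomial.X))
    rw [Polynomial.coeToPowerSeries.ringHom_apply] at this
    rw [this, Multiset.map_map]
    congr 1
    refine Multiset.map_congr rfl fun ω _ => ?_
    simp
  have hld := log_deriv W
  rw [← hps] at hld
  have hrec2 : ∀ D : ℕ, ((D : ℂ) + 1) * c (D + 1) = -∑ m ∈ Finset.range (D + 1), c (D - m) * (W.map fun ω => ω ^ (m + 1)).sum := by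
    intro D
    have := congrArg (PowerSeries.coeff D) hld
    rw [PowerSeries.coeff_derivative, Polynomial.coeff_coe, hcoeff, map_neg, PowerSeries.coeff_mul,
      ← Finset.Nat.sum_antidiagonal_swap, Finset.Nat.sum_antidiagonal_eq_sum_range_succ_mk] at this
    rw [mul_comm, this]
    congr 1
    refine Finset.sum_congr rfl fun m _ => ?_
    simp [hcoeff]
  intro m
  induction m using Nat.strong_induction_on with
  | _ m ih =>
    intro hm
    obtain ⟨m, rfl⟩ := Nat.exists_eq_add_of_le' hm
    have h1 := hrec (m + 1)
    have h2 := hrec2 m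
    have h3 : ∑ j ∈ Finset.Icc 1 (m + 1), s j * c (m + 1 - j) =
        ∑ j ∈ Finset.range (m + 1), s (j + 1) * c (m - j) := by
      have h5 := Finset.sum_Ico_add' (fun j => s j * c (m + 1 - j)) 0 (m + 1) 1
      rw [Finset.range_eq_Ico]
      refine Eq.trans ?_ (h5.symm.trans ?_)
      · rfl
      · refine Finset.sum_congr rfl fun j _ => ?_
        rw [Nat.add_sub_add_right]
    rw [h3, Finset.sum_range_succ] at h1
    rw [Finset.sum_range_succ] at h2
    rw [Nat.sub_self, hc0] at h1 h2
    have h4 : ∑ j ∈ Finset.range m, s (j + 1) * c (m - j) =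
        -∑ j ∈ Finset.range m, c (m - j) * (W.map fun ω => ω ^ (j + 1)).sum := by
      rw [← Finset.sum_neg_distrib]
      refine Finset.sum_congr rfl fun j hj => ?_
      rw [ih (j + 1) (by simpa using hj) (by omega)]
      ring
    rw [h4] at h1
    push_cast at h1
    linear_combination h2 - h1
end
end WB

namespace WB
section

theorem dominant (V : Multiset ℂ) (Q C : ℝ) (hQ : 0 < Q) (hC : 0 ≤ C) (l0 : ℕ)
    (h : ∀ l : ℕ, l0 ≤ l → ‖(V.map fun z => z ^ l).sum‖ ≤ C * Q ^ l) :
    ∀ z ∈ V, ‖z‖ ≤ Q := by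
  classical
  intro z hz
  set g : Polynomial ℂ := ∏ w ∈ V.toFinset.erase z, (Polynomial.X - Polynomial.C w) with hg
  have hgz : g.eval z ≠ 0 := by
    rw [hg, Polynomial.eval_prod, Finset.prod_ne_zero_iff]
    intro w hw
    simp only [Polynomial.eval_sub, Polynomial.eval_X, Polynomial.eval_C]
    exact sub_ne_zero.2 (Finset.ne_of_mem_erase hw).symm
  have hgw : ∀ w ∈ V.toFinset, w ≠ z → g.eval w = 0 := by
    intro w hw hwz
    rw [hg, Polynomial.eval_prod]
    exact Finset.prod_eq_zero (Finset.mem_erase.2 ⟨hwz, hw⟩) (by simp)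
  have key : ∀ l : ℕ, (V.count z : ℂ) * (z ^ l * g.eval z) =
      ∑ i ∈ Finset.range (g.natDegree + 1), g.coeff i * (V.map fun w => w ^ (l + i)).sum := by
    intro l
    have h1 : (V.map fun w => w ^ l * g.eval w).sum = (V.count z : ℂ) * (z ^ l * g.eval z) := by
      rw [Finset.sum_multiset_map_count, Finset.sum_eq_single z]
      · rw [nsmul_eq_mul]
      · intro w hw hwz
        rw [hgw w hw hwz]; simp
      · intro h; exact absurd (Multiset.mem_toFinset.2 hz) h
    rw [← h1]
    simp_rw [Finset.sum_multiset_map_count, Finset.mul_sum]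
    rw [Finset.sum_comm]
    refine Finset.sum_congr rfl fun w _ => ?_
    rw [Polynomial.eval_eq_sum_range, Finset.mul_sum, Finset.smul_sum]
    refine Finset.sum_congr rfl fun i _ => ?_
    simp only [nsmul_eq_mul]
    rw [pow_add]; ring
  set B : ℝ := ∑ i ∈ Finset.range (g.natDegree + 1), ‖g.coeff i‖ * (C * Q ^ i) with hB
  have hbound : ∀ l : ℕ, l0 ≤ l → ‖g.eval z‖ * ‖z‖ ^ l ≤ B * Q ^ l := by
    intro l hl
    have h2 : ‖(V.count z : ℂ) * (z ^ l * g.eval z)‖ ≤ B * Q ^ l := by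
      rw [key, hB, Finset.sum_mul]
      refine norm_sum_le_of_le _ fun i _ => ?_
      rw [norm_mul, mul_assoc]
      refine mul_le_mul_of_nonneg_left ((h (l + i) (by omega)).trans (le_of_eq ?_)) (norm_nonneg _)
      rw [pow_add]; ring
    rw [norm_mul, norm_mul, norm_pow, Complex.norm_natCast] at h2
    have h3 : (1 : ℝ) ≤ V.count z := by exact_mod_cast Multiset.one_le_count_iff_mem.2 hz
    nlinarith [mul_nonneg (pow_nonneg (norm_nonneg z) l) (norm_nonneg (g.eval z))]
  by_contra hlt
  push Not at hlt
  have hr : 1 < ‖z‖ / Q := (one_lt_div hQ).2 hlt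
  have hA : 0 < ‖g.eval z‖ := norm_pos_iff.2 hgz
  obtain ⟨l, hl⟩ := (((tendsto_pow_atTop_atTop_of_one_lt hr).eventually_gt_atTop (B / ‖g.eval z‖)).and
    (Filter.eventually_ge_atTop l0)).exists
  have h4 := hbound l hl.2
  have h5 := hl.1
  rw [div_lt_iff₀ hA, div_pow, div_mul_eq_mul_div, lt_div_iff₀ (pow_pos hQ l)] at h5
  linarith

theorem sum_bound (W : Multiset ℂ) (hW : Multiset.card W ≤ 4) (Q C : ℝ) (hQ : 0 < Q) (hC : 0 ≤ C) (l0 : ℕ)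
    (h : ∀ l : ℕ, l0 ≤ l → ‖(W.map fun z => z ^ (2 * l)).sum‖ ≤ C * Q ^ l) :
    ‖(W.map fun z => z ^ 1).sum‖ ≤ 4 * √Q := by
  have h1 := dominant (W.map fun z => z ^ 2) Q C hQ hC l0 (by
    intro l hl
    rw [Multiset.map_map]
    convert h l hl using 5
    simp [pow_mul])
  have h2 : ∀ z ∈ W, ‖z‖ ≤ √Q := by
    intro z hz
    have := h1 (z ^ 2) (Multiset.mem_map_of_mem _ hz)
    rw [norm_pow] at this
    exact Real.le_sqrt_of_sq_le this
  simp only [pow_one, Multiset.map_id']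
  calc ‖W.sum‖ ≤ (W.map fun z => ‖z‖).sum := by
        simpa using norm_multiset_sum_le W
    _ ≤ Multiset.card (W.map fun z => ‖z‖) • √Q := by
        apply Multiset.sum_le_card_nsmul
        intro x hx
        obtain ⟨z, hz, rfl⟩ := Multiset.mem_map.1 hx
        exact h2 z hz
    _ ≤ 4 * √Q := by
        rw [Multiset.card_map, nsmul_eq_mul]
        exact mul_le_mul_of_nonneg_right (by exact_mod_cast hW) (Real.sqrt_nonneg _)
end
end WB

namespace WB
section
variable (K : Type*) [Field K] [Fintype K] (χ : MulChar K ℂ) (ψ : AddChar K ℂ) (u v : K)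

theorem SE_eq_Sm (E : Type*) [Field E] [Fintype E] [Algebra K E] (m D : ℕ) (hm : Module.finrank K E = m)
    (hD : m ≤ D) : SE K E χ ψ u v = Sm K χ ψ u v D m := by
  subst hm
  rw [SE_formula K E χ ψ u v D hD]
  rfl

/-- the Weil bound -/
theorem weil_bound (hψ : ψ ≠ 1) (h : χ ≠ 1 ∨ u ≠ 0 ∨ v ≠ 0) :
    ‖∑ x : K, χ (x + x⁻¹) * ψ (u * x + v * x⁻¹)‖ ≤ 4 * √(Fintype.card K : ℝ) := by
  obtain ⟨p, hp⟩ := CharP.exists K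
  haveI : Fact p.Prime := ⟨CharP.char_is_prime K p⟩
  have hcons : ∀ m D : ℕ, 1 ≤ m → m ≤ D → Sm K χ ψ u v D m = Sm K χ ψ u v m m := by
    intro m D h1 h2
    haveI : NeZero m := ⟨by omega⟩
    letI := Fintype.ofFinite (FiniteField.Extension K p m)
    rw [← SE_eq_Sm K χ ψ u v (FiniteField.Extension K p m) m D (FiniteField.finrank_extension K p m) h2,
      ← SE_eq_Sm K χ ψ u v (FiniteField.Extension K p m) m m (FiniteField.finrank_extension K p m) le_rfl]
  obtain ⟨W, hW, hs⟩ := power_sums (cD K χ ψ u v) (fun m => Sm K χ ψ u v m m) (cD_zero K χ ψ u v)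
    (fun D hD => cD_vanish K χ ψ u v hψ h D hD) (by
      intro D
      rw [recurrence]
      refine Finset.sum_congr rfl fun m hm => ?_
      rw [Finset.mem_Icc] at hm
      rw [hcons m D hm.1 hm.2])
  have h1 : ∑ x : K, χ (x + x⁻¹) * ψ (u * x + v * x⁻¹) = Sm K χ ψ u v 1 1 := by
    rw [← SE_eq_Sm K χ ψ u v K 1 1 (Module.finrank_self K) le_rfl, SE]
    simp [Algebra.norm_self, Algebra.trace_self_apply]
  rw [h1]
  have h2 := hs 1 le_rfl
  rw [h2, norm_neg]
  have hQ1 : 1 < Fintype.card K := Fintype.one_lt_card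
  refine sum_bound W hW (Fintype.card K) (CC (Fintype.card K) + 3) (by exact_mod_cast (by omega : 0 < Fintype.card K))
    (by positivity) (CC (Fintype.card K) + 1) ?_
  intro l hl
  have h3 := hs (2 * l) (by omega)
  rw [← norm_neg, ← h3]
  haveI : NeZero (2 * l) := ⟨by omega⟩
  letI := Fintype.ofFinite (FiniteField.Extension K p (2 * l))
  rw [← SE_eq_Sm K χ ψ u v (FiniteField.Extension K p (2 * l)) (2 * l) (2 * l)
    (FiniteField.finrank_extension K p (2 * l)) le_rfl]
  refine char_bound K _ l ?_ ?_ χ ψ hψ u v h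
  · rw [← Nat.card_eq_fintype_card, FiniteField.natCard_extension, Nat.card_eq_fintype_card, ← pow_mul, mul_comm]
  · exact (by omega : CC (Fintype.card K) ≤ l).trans (Nat.lt_pow_self hQ1).le
end
end WB

namespace WB
section
variable (E : Type*) [Field E] [Fintype E] [Fintype (MulChar E ℂ)] [DecidableEq (MulChar E ℂ)]

/-- `f` has a character expansion with exponent `m`, trivial coefficient `c1`, and the
nontrivial coefficients summing to at most `B` in absolute value -/
def Rep (f : E → ℝ) (m : ℕ) (c1 B : ℝ) : Prop :=
  ∃ c : MulChar E ℂ → ℂ, (∀ y : E, y ≠ 0 → (f y : ℂ) = ∑ χ, c χ * χ y) ∧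
    (∀ χ, c χ ≠ 0 → χ ^ m = 1) ∧ c 1 = c1 ∧ ∑ χ ∈ Finset.univ.erase 1, ‖c χ‖ ≤ B

variable {E}

theorem Rep.const (r : ℝ) : Rep E (fun _ => r) 1 r 0 := by
  refine ⟨fun χ => if χ = 1 then r else 0, ?_, ?_, by simp, ?_⟩
  · intro y hy
    simp only [ite_mul, zero_mul, Finset.sum_ite_eq', Finset.mem_univ, if_true]
    rw [MulChar.one_apply (IsUnit.mk0 y hy), mul_one]
  · intro χ h
    by_cases hχ : χ = 1
    · simp [hχ]
    · simp [hχ] at h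
  · refine (Finset.sum_eq_zero fun χ hχ => ?_).le
    simp [(Finset.mem_erase.1 hχ).1]

theorem Rep.mono {f : E → ℝ} {m m' : ℕ} {c1 B : ℝ} (h : Rep E f m c1 B) (hm : m ∣ m') : Rep E f m' c1 B := by
  obtain ⟨c, h1, h2, h3⟩ := h
  refine ⟨c, h1, fun χ hχ => ?_, h3⟩
  obtain ⟨d, rfl⟩ := hm
  rw [pow_mul, h2 χ hχ, one_pow]

theorem Rep.add {f g : E → ℝ} {m : ℕ} {c1 B c2 B' : ℝ} (hf : Rep E f m c1 B) (hg : Rep E g m c2 B') :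
    Rep E (fun y => f y + g y) m (c1 + c2) (B + B') := by
  obtain ⟨c, h1, h2, h3, h4⟩ := hf
  obtain ⟨d, k1, k2, k3, k4⟩ := hg
  refine ⟨fun χ => c χ + d χ, ?_, ?_, ?_, ?_⟩
  · intro y hy
    push_cast
    rw [h1 y hy, k1 y hy, ← Finset.sum_add_distrib]
    simp_rw [add_mul]
  · intro χ h
    by_cases hc : c χ = 0
    · refine k2 χ fun hd => h ?_
      simp only [hc, hd, add_zero]
    · exact h2 χ hc
  · simp only [h3, k3]; push_cast; rfl
  · refine (Finset.sum_le_sum fun χ _ => norm_add_le _ _).trans ?_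
    rw [Finset.sum_add_distrib]
    exact add_le_add h4 k4

theorem total_split (c : MulChar E ℂ → ℂ) :
    ∑ χ, ‖c χ‖ = ‖c 1‖ + ∑ χ ∈ Finset.univ.erase 1, ‖c χ‖ :=
  (Finset.add_sum_erase _ _ (Finset.mem_univ 1)).symm

theorem Rep.mul {f g : E → ℝ} {m m' : ℕ} {c1 B c2 B' : ℝ} (hf : Rep E f m c1 B) (hg : Rep E g m' c2 B')
    (hco : Nat.Coprime m m') (hc1 : 0 ≤ c1) (hc2 : 0 ≤ c2) (hB : 0 ≤ B) :
    Rep E (fun y => f y * g y) (m * m') (c1 * c2) ((c1 + B) * (c2 + B') - c1 * c2) := by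
  obtain ⟨c, h1, h2, h3, h4⟩ := hf
  obtain ⟨d, k1, k2, k3, k4⟩ := hg
  have hone : ∑ η : MulChar E ℂ, c η * d (η⁻¹ * 1) = (c1 * c2 : ℝ) := by
    rw [Finset.sum_eq_single 1]
    · simp [h3, k3]
    · intro η _ hη
      by_contra hne
      have e1 : η ^ m = 1 := h2 η (left_ne_zero_of_mul hne)
      have e2 := k2 _ (right_ne_zero_of_mul hne)
      rw [mul_one, inv_pow, inv_eq_one] at e2
      have e3 := Nat.dvd_gcd (orderOf_dvd_of_pow_eq_one e1) (orderOf_dvd_of_pow_eq_one e2)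
      rw [hco.gcd_eq_one, Nat.dvd_one, orderOf_eq_one_iff] at e3
      exact hη e3
    · intro h; exact absurd (Finset.mem_univ _) h
  refine ⟨fun χ => ∑ η, c η * d (η⁻¹ * χ), ?_, ?_, hone, ?_⟩
  · intro y hy
    push_cast
    rw [h1 y hy, k1 y hy, Finset.sum_mul_sum]
    simp_rw [Finset.sum_mul]
    conv_rhs => rw [Finset.sum_comm]
    refine Finset.sum_congr rfl fun η _ => ?_
    rw [← Equiv.sum_comp (Equiv.mulLeft η⁻¹)]
    refine Finset.sum_congr rfl fun χ _ => ?_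
    have : χ = η * (η⁻¹ * χ) := by group
    simp only [Equiv.coe_mulLeft]
    conv_rhs => rw [this, MulChar.mul_apply]
    rw [mul_inv_cancel_left]
    ring
  · intro χ h
    obtain ⟨η, _, hη⟩ := Finset.exists_ne_zero_of_sum_ne_zero h
    have e1 := h2 η (left_ne_zero_of_mul hη)
    have e2 := k2 _ (right_ne_zero_of_mul hη)
    have : χ = η * (η⁻¹ * χ) := by group
    rw [this, mul_pow, pow_mul, e1, one_pow, one_mul, mul_comm m, pow_mul, e2, one_pow]
  · have hs := total_split (fun χ => ∑ η, c η * d (η⁻¹ * χ))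
    have hone' : ‖∑ η, c η * d (η⁻¹ * 1)‖ = c1 * c2 := by
      rw [hone, Complex.norm_real, Real.norm_of_nonneg (mul_nonneg hc1 hc2)]
    rw [hone'] at hs
    have ht : ∑ χ, ‖∑ η, c η * d (η⁻¹ * χ)‖ ≤ (∑ η, ‖c η‖) * ∑ χ, ‖d χ‖ := by
      rw [Finset.sum_mul]
      refine (Finset.sum_le_sum fun χ _ => norm_sum_le _ _).trans ?_
      rw [Finset.sum_comm]
      refine (Finset.sum_congr rfl fun η _ => ?_).le
      rw [Finset.mul_sum, ← Equiv.sum_comp (Equiv.mulLeft η)]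
      refine Finset.sum_congr rfl fun χ _ => ?_
      simp
    have t1 : ∑ η, ‖c η‖ ≤ c1 + B := by
      rw [total_split, h3, Complex.norm_real, Real.norm_of_nonneg hc1]; linarith
    have t2 : ∑ η, ‖d η‖ ≤ c2 + B' := by
      rw [total_split, k3, Complex.norm_real, Real.norm_of_nonneg hc2]; linarith
    have t3 := mul_le_mul t1 t2 (Finset.sum_nonneg fun _ _ => norm_nonneg _) (by linarith)
    linarith

/-- indicator that `y` is not an `ℓ`-th power -/
noncomputable def gInd (E : Type*) [Field E] [Fintype E] (l : ℕ) (y : E) : ℝ :=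
  open Classical in if y ^ ((Fintype.card E - 1) / l) = 1 then 0 else 1

theorem sum_killed (l : ℕ) (hl : l ∣ Fintype.card E - 1) (y : E) (hy : y ≠ 0) :
    open Classical in
    ∑ χ ∈ (Finset.univ.filter fun χ : MulChar E ℂ => χ ^ l = 1), χ y =
      if y ^ ((Fintype.card E - 1) / l) = 1 then (l : ℂ) else 0 := by
  classical
  have h1 : 1 < Fintype.card E := Fintype.one_lt_card
  have hNu : Nat.card Eˣ = Fintype.card E - 1 := by
    rw [Nat.card_units, Nat.card_eq_fintype_card]
  haveI : NeZero (Monoid.exponent Eˣ) := ⟨Monoid.exponent_ne_zero_of_finite⟩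
  split_ifs with h
  · obtain ⟨e⟩ := MulChar.mulEquiv_units E ℂ
    have hcard : (Finset.univ.filter fun χ : MulChar E ℂ => χ ^ l = 1).card = l := by
      have h2 := IsCyclic.card_powMonoidHom_ker (G := Eˣ) l
      rw [hNu, Nat.gcd_eq_right hl] at h2
      rw [← Fintype.card_subtype, ← Nat.card_eq_fintype_card]
      refine Eq.trans ?_ h2
      refine Nat.card_congr (e.toEquiv.subtypeEquiv fun χ => ?_)
      simp [MonoidHom.mem_ker, ← map_pow]
    have hall : ∀ χ ∈ Finset.univ.filter (fun χ : MulChar E ℂ => χ ^ l = 1), χ y = 1 := by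
      intro χ hχ
      have hχ' := (Finset.mem_filter.1 hχ).2
      obtain ⟨γ, hγ⟩ := IsCyclic.exists_generator (α := Eˣ)
      obtain ⟨i, hi⟩ := (Submonoid.mem_powers_iff _ _).1 (mem_powers_iff_mem_zpowers.2 (hγ (Units.mk0 y hy)))
      have hord : orderOf γ = Fintype.card E - 1 := by
        rw [orderOf_eq_card_of_forall_mem_zpowers hγ, hNu]
      have h3 : γ ^ (i * ((Fintype.card E - 1) / l)) = 1 := by
        rw [pow_mul, hi]; ext; simpa using h
      have h4 := orderOf_dvd_of_pow_eq_one h3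
      rw [hord] at h4
      obtain ⟨d, hd⟩ := hl
      have hl0 : 0 < l := Nat.pos_of_ne_zero (by rintro rfl; omega)
      have hd0 : 0 < d := Nat.pos_of_ne_zero (by rintro rfl; omega)
      rw [hd, Nat.mul_div_cancel_left _ hl0] at h4
      obtain ⟨j, hj⟩ := Nat.dvd_of_mul_dvd_mul_right hd0 h4
      have hy' : y = ((γ : E) ^ j) ^ l := by
        rw [← pow_mul, mul_comm j, ← hj]
        have := congrArg Units.val hi
        simpa using this.symm
      rw [hy', map_pow, ← Units.val_pow_eq_pow_val, ← MulChar.pow_apply_coe, hχ', MulChar.one_apply_coe]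
    rw [Finset.sum_congr rfl hall, Finset.sum_const, hcard]; simp
  · obtain ⟨χ1, hχ1⟩ := MulChar.exists_apply_ne_one_of_hasEnoughRootsOfUnity E ℂ h
    set χ0 := χ1 ^ ((Fintype.card E - 1) / l) with hχ0
    have hu : IsUnit y := IsUnit.mk0 y hy
    have h2 : χ0 y ≠ 1 := by
      rw [map_pow] at hχ1
      have := MulChar.pow_apply_coe χ1 ((Fintype.card E - 1) / l) hu.unit
      rw [IsUnit.unit_spec] at this
      rwa [hχ0, this]
    have h3 : χ0 ^ l = 1 := by
      rw [hχ0, ← pow_mul, Nat.div_mul_cancel hl]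
      ext z
      rw [MulChar.pow_apply_coe, ← map_pow]
      have : (z : E) ^ (Fintype.card E - 1) = 1 := FiniteField.pow_card_sub_one_eq_one _ z.ne_zero
      simp [this]
    have h4 : χ0 y * ∑ χ ∈ (Finset.univ.filter fun χ : MulChar E ℂ => χ ^ l = 1), χ y =
        ∑ χ ∈ (Finset.univ.filter fun χ : MulChar E ℂ => χ ^ l = 1), χ y := by
      rw [Finset.mul_sum]
      refine Finset.sum_bij' (fun χ _ => χ0 * χ) (fun χ _ => χ0⁻¹ * χ) ?_ ?_ ?_ ?_ ?_
      · intro χ hχ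
        simp only [Finset.mem_filter, Finset.mem_univ, true_and] at hχ ⊢
        rw [mul_pow, h3, hχ, one_mul]
      · intro χ hχ
        simp only [Finset.mem_filter, Finset.mem_univ, true_and] at hχ ⊢
        rw [mul_pow, inv_pow, h3, hχ, inv_one, one_mul]
      · intro χ _; simp
      · intro χ _; simp
      · intro χ _; rw [MulChar.mul_apply]
    have h5 : (χ0 y - 1) * ∑ χ ∈ (Finset.univ.filter fun χ : MulChar E ℂ => χ ^ l = 1), χ y = 0 := by
      rw [sub_mul, h4, one_mul, sub_self]
    exact (mul_eq_zero.1 h5).resolve_left (sub_ne_zero.2 h2)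

theorem Rep.gInd (l : ℕ) (hl : l ∣ Fintype.card E - 1) (hl2 : 1 ≤ l) :
    Rep E (gInd E l) l (1 - 1 / l) (1 - 1 / l) := by
  classical
  have hl0 : (l : ℝ) ≠ 0 := by positivity
  have hl0' : (l : ℂ) ≠ 0 := by exact_mod_cast hl0
  refine ⟨fun χ => (if χ = 1 then (1 : ℂ) else 0) - (if χ ^ l = 1 then (1 / l : ℂ) else 0), ?_, ?_, ?_, ?_⟩
  · intro y hy
    simp_rw [sub_mul, ite_mul, zero_mul]
    rw [Finset.sum_sub_distrib, Finset.sum_ite_eq', if_pos (Finset.mem_univ _), ← Finset.sum_filter,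
      ← Finset.mul_sum, sum_killed l hl y hy, MulChar.one_apply (IsUnit.mk0 y hy), WB.gInd]
    split_ifs
    · push_cast; field_simp; ring
    · simp
  · intro χ h
    by_contra hχ
    have : χ ≠ 1 := by rintro rfl; simp at hχ
    simp [hχ, this] at h
  · simp
  · have h1 : ∑ χ : MulChar E ℂ, (if χ ^ l = 1 then (1 / l : ℝ) else 0) = 1 := by
      have := sum_killed l hl (1 : E) one_ne_zero
      simp only [map_one, one_pow, if_true, Finset.sum_const, nsmul_eq_mul, mul_one] at this
      rw [← Finset.sum_filter, Finset.sum_const, nsmul_eq_mul]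
      have h2 : ((Finset.univ.filter fun χ : MulChar E ℂ => χ ^ l = 1).card : ℝ) = l := by exact_mod_cast this
      rw [h2]; field_simp
    rw [← Finset.add_sum_erase _ _ (Finset.mem_univ 1), one_pow, if_pos rfl] at h1
    rw [← eq_sub_iff_add_eq'] at h1
    rw [← h1]
    refine Finset.sum_le_sum fun χ hχ => ?_
    beta_reduce
    rw [if_neg (Finset.ne_of_mem_erase hχ)]
    split_ifs <;> simp

theorem Rep.prodInd (T : Finset ℕ) (hT : ∀ p ∈ T, p.Prime ∧ p ∣ Fintype.card E - 1) :
    Rep E (fun y => ∏ p ∈ T, WB.gInd E p y) (∏ p ∈ T, p) (∏ p ∈ T, (1 - 1 / (p : ℝ)))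
      ((∏ p ∈ T, (1 - 1 / (p : ℝ))) * (2 ^ T.card - 1)) := by
  classical
  have hpos : ∀ p : ℕ, p.Prime → 0 ≤ 1 - 1 / (p : ℝ) := by
    intro p hp
    rw [sub_nonneg, div_le_one (by exact_mod_cast hp.pos)]
    exact_mod_cast hp.one_le
  induction T using Finset.induction_on with
  | empty => simpa using Rep.const (E := E) 1
  | insert p T hp ih =>
    have ih' := ih fun r hr => hT r (Finset.mem_insert_of_mem hr)
    obtain ⟨hp1, hp2⟩ := hT p (Finset.mem_insert_self _ _)
    have h0 : 0 ≤ ∏ p ∈ T, (1 - 1 / (p : ℝ)) :=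
      Finset.prod_nonneg fun r hr => hpos r (hT r (Finset.mem_insert_of_mem hr)).1
    have := Rep.mul (Rep.gInd p hp2 hp1.one_le) ih' (by
      refine Nat.Coprime.prod_right fun r hr => ?_
      refine (Nat.coprime_primes hp1 (hT r (Finset.mem_insert_of_mem hr)).1).2 ?_
      rintro rfl; exact hp hr) (hpos p hp1) h0 (hpos p hp1)
    simp only [Finset.prod_insert hp, Finset.card_insert_of_notMem hp]
    convert this using 1
    rw [pow_succ]; ring

theorem Rep.sumInd (T : Finset ℕ) (m : ℕ) (hT : ∀ p ∈ T, p.Prime ∧ p ∣ Fintype.card E - 1 ∧ p ∣ m) (r : ℝ) :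
    Rep E (fun y => r + ∑ p ∈ T, WB.gInd E p y) m (r + ∑ p ∈ T, (1 - 1 / (p : ℝ)))
      (∑ p ∈ T, (1 - 1 / (p : ℝ))) := by
  classical
  induction T using Finset.induction_on with
  | empty => simpa using (Rep.const (E := E) r).mono (one_dvd m)
  | insert p T hp ih =>
    have ih' := ih fun r hr => hT r (Finset.mem_insert_of_mem hr)
    obtain ⟨hp1, hp2, hp3⟩ := hT p (Finset.mem_insert_self _ _)
    have := Rep.add ((Rep.gInd p hp2 hp1.one_le).mono hp3) ih'
    simp only [Finset.sum_insert hp]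
    convert this using 1
    · ext y; ring
    · ring

end
end WB

namespace WB
section
variable (F E : Type*) [Field F] [Fintype F] [Field E] [Fintype E] [Algebra F E]
  [Fintype (MulChar E ℂ)] [DecidableEq (MulChar E ℂ)]

theorem trace_char_ne_one (ψ : AddChar F ℂ) (hψ : ψ ≠ 1) :
    ψ.compAddMonoidHom (Algebra.trace F E).toAddMonoidHom ≠ 1 := by
  intro h
  apply hψ
  ext x
  obtain ⟨y, rfl⟩ := Algebra.trace_surjective F E x
  have := DFunLike.congr_fun h y
  simpa using this

/-- the twisted sum -/
noncomputable def SF (ψ : AddChar F ℂ) (χ : MulChar E ℂ) (u v : F) : ℂ :=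
  ∑ x : E, χ (x + x⁻¹) * ψ (u * Algebra.trace F E x + v * Algebra.trace F E x⁻¹)

theorem SF_bound (ψ : AddChar F ℂ) (hψ : ψ ≠ 1) (χ : MulChar E ℂ) (u v : F)
    (h : χ ≠ 1 ∨ u ≠ 0 ∨ v ≠ 0) : ‖SF F E ψ χ u v‖ ≤ 4 * √(Fintype.card E : ℝ) := by
  have := weil_bound E χ (ψ.compAddMonoidHom (Algebra.trace F E).toAddMonoidHom) (algebraMap F E u)
    (algebraMap F E v) (trace_char_ne_one F E ψ hψ) (by simpa using h)
  rw [SF]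
  convert this using 6
  simp [← Algebra.smul_def]

theorem SF_trivial (ψ : AddChar F ℂ) : (Fintype.card E : ℝ) - 3 ≤ (SF F E ψ 1 0 0).re := by
  classical
  have h1 : SF F E ψ 1 0 0 = ((Finset.univ.filter fun x : E => ¬ (x + x⁻¹ = 0)).card : ℂ) := by
    rw [SF, Finset.card_filter]
    push_cast
    refine Finset.sum_congr rfl fun x _ => ?_
    by_cases hx : x + x⁻¹ = 0
    · rw [hx, MulChar.map_zero]; simp
    · rw [MulChar.one_apply (IsUnit.mk0 _ hx)]; simp [hx]
  rw [h1, Complex.natCast_re]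
  have a1 := Finset.card_filter_add_card_filter_not (s := (Finset.univ : Finset E)) (fun x : E => x + x⁻¹ = 0)
  have a2 := card_bad E
  rw [Finset.card_univ] at a1
  have a3 : (Fintype.card E : ℝ) ≤ ((Finset.univ.filter fun x : E => ¬ (x + x⁻¹ = 0)).card : ℝ) + 3 := by
    exact_mod_cast (by omega : Fintype.card E ≤ (Finset.univ.filter fun x : E => ¬ (x + x⁻¹ = 0)).card + 3)
  linarith

theorem SF_trivial_im (ψ : AddChar F ℂ) : (SF F E ψ 1 0 0).im = 0 := by
  rw [SF, Complex.im_sum]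
  refine Finset.sum_eq_zero fun x _ => ?_
  by_cases hx : x + x⁻¹ = 0
  · rw [hx, MulChar.map_zero]; simp
  · rw [MulChar.one_apply (IsUnit.mk0 _ hx)]; simp

open Classical in
theorem count_formula (ψ : AddChar F ℂ) (hψ : ψ ≠ 1) (f : E → ℝ) (c : MulChar E ℂ → ℂ)
    (hf : ∀ y : E, y ≠ 0 → (f y : ℂ) = ∑ χ, c χ * χ y) (a b : F) :
    (Fintype.card F : ℂ) ^ 2 * ((∑ x : E, if x + x⁻¹ ≠ 0 ∧ Algebra.trace F E x = a ∧ Algebra.trace F E x⁻¹ = b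
      then f (x + x⁻¹) else 0 : ℝ) : ℂ) =
    ∑ i : (F × F) × MulChar E ℂ, c i.2 * ψ (-(i.1.1 * a + i.1.2 * b)) * SF F E ψ i.2 i.1.1 i.1.2 := by
  have hprim := AddChar.IsPrimitive.of_ne_one hψ
  have key : ∀ x : E, ∑ i : (F × F) × MulChar E ℂ, c i.2 * ψ (-(i.1.1 * a + i.1.2 * b)) *
      (i.2 (x + x⁻¹) * ψ (i.1.1 * Algebra.trace F E x + i.1.2 * Algebra.trace F E x⁻¹)) =
      (∑ χ, c χ * χ (x + x⁻¹)) * ((∑ u, ψ (u * (Algebra.trace F E x - a))) *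
        ∑ v, ψ (v * (Algebra.trace F E x⁻¹ - b))) := by
    intro x
    rw [Fintype.sum_prod_type, Fintype.sum_prod_type, Finset.sum_mul_sum, Finset.mul_sum]
    refine Finset.sum_congr rfl fun u _ => ?_
    rw [Finset.mul_sum]
    refine Finset.sum_congr rfl fun v _ => ?_
    rw [Finset.sum_mul]
    refine Finset.sum_congr rfl fun χ _ => ?_
    have : ψ (-(u * a + v * b)) * ψ (u * Algebra.trace F E x + v * Algebra.trace F E x⁻¹) =
      ψ (u * (Algebra.trace F E x - a)) * ψ (v * (Algebra.trace F E x⁻¹ - b)) := by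
      rw [← AddChar.map_add_eq_mul, ← AddChar.map_add_eq_mul]
      congr 1; ring
    linear_combination (c χ * χ (x + x⁻¹)) * this
  simp_rw [SF, Finset.mul_sum]
  rw [Finset.sum_comm]
  push_cast
  rw [Finset.mul_sum]
  refine Finset.sum_congr rfl fun x _ => ?_
  rw [key, AddChar.sum_mulShift _ hprim, AddChar.sum_mulShift _ hprim]
  by_cases hx : x + x⁻¹ = 0
  · have h0 : ∑ χ : MulChar E ℂ, c χ * χ (x + x⁻¹) = 0 :=
      Finset.sum_eq_zero fun χ _ => by rw [hx, MulChar.map_zero, mul_zero]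
    rw [h0]; simp [hx]
  · rw [← hf _ hx]
    simp only [sub_eq_zero]
    by_cases h1 : Algebra.trace F E x = a <;> by_cases h2 : Algebra.trace F E x⁻¹ = b <;> simp [hx, h1, h2]
    ring

theorem sieve_main (f : E → ℝ) (m : ℕ) (c1 B : ℝ) (hf : Rep E f m c1 B) (hc1 : 0 ≤ c1) (a b : F)
    (hno : ∀ x : E, x + x⁻¹ ≠ 0 → Algebra.trace F E x = a → Algebra.trace F E x⁻¹ = b → f (x + x⁻¹) ≤ 0) :
    c1 * ((Fintype.card E : ℝ) - 3) ≤
      4 * √(Fintype.card E : ℝ) * ((Fintype.card F : ℝ) ^ 2 * (c1 + B) - c1) := by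
  classical
  obtain ⟨ψ, hψ1⟩ := AddChar.exists_apply_ne_zero.2 (one_ne_zero (α := F))
  have hψ : ψ ≠ 1 := by rintro rfl; simp at hψ1
  obtain ⟨c, h1, -, h3, h4⟩ := hf
  have hform := count_formula F E ψ hψ f c h1 a b
  set T : ℝ := ∑ x : E, if x + x⁻¹ ≠ 0 ∧ Algebra.trace F E x = a ∧ Algebra.trace F E x⁻¹ = b
      then f (x + x⁻¹) else 0 with hT
  have hT0 : T ≤ 0 := by
    refine Finset.sum_nonpos fun x _ => ?_
    split_ifs with h
    · exact hno x h.1 h.2.1 h.2.2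
    · exact le_rfl
  rw [← Finset.add_sum_erase _ _ (Finset.mem_univ ((0, 0), 1))] at hform
  simp only [zero_mul, add_zero, neg_zero, AddChar.map_zero_eq_one, mul_one] at hform
  set R := ∑ i ∈ Finset.univ.erase (((0, 0), 1) : (F × F) × MulChar E ℂ),
    c i.2 * ψ (-(i.1.1 * a + i.1.2 * b)) * SF F E ψ i.2 i.1.1 i.1.2 with hR
  have hnc : ‖c 1‖ = c1 := by rw [h3, Complex.norm_real, Real.norm_of_nonneg hc1]
  have hRb : ‖R‖ ≤ 4 * √(Fintype.card E : ℝ) * ((Fintype.card F : ℝ) ^ 2 * (c1 + B) - c1) := by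
    have e1 : ‖R‖ ≤ ∑ i ∈ Finset.univ.erase (((0, 0), 1) : (F × F) × MulChar E ℂ),
        4 * √(Fintype.card E : ℝ) * ‖c i.2‖ := by
      refine norm_sum_le_of_le _ fun i hi => ?_
      rw [norm_mul, norm_mul, AddChar.norm_apply, mul_one, mul_comm]
      refine mul_le_mul_of_nonneg_right (SF_bound F E ψ hψ _ _ _ ?_) (norm_nonneg _)
      by_contra hcon
      push Not at hcon
      refine Finset.ne_of_mem_erase hi ?_
      ext1
      · exact Prod.ext hcon.2.1 hcon.2.2
      · exact hcon.1
    refine e1.trans ?_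
    rw [← Finset.mul_sum]
    refine mul_le_mul_of_nonneg_left ?_ (by positivity)
    have e2 := Finset.add_sum_erase Finset.univ (fun i : (F × F) × MulChar E ℂ => ‖c i.2‖)
      (Finset.mem_univ ((0, 0), 1))
    rw [Fintype.sum_prod_type] at e2
    simp only [Finset.sum_const, Finset.card_univ, Fintype.card_prod, nsmul_eq_mul, total_split, hnc] at e2
    push_cast at e2
    have e3 : (Fintype.card F : ℝ) ^ 2 * (∑ χ ∈ Finset.univ.erase 1, ‖c χ‖) ≤ (Fintype.card F : ℝ) ^ 2 * B :=
      mul_le_mul_of_nonneg_left h4 (by positivity)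
    linarith
  have hre := congrArg Complex.re hform
  rw [h3, Complex.add_re, Complex.re_ofReal_mul] at hre
  have h5 : ((Fintype.card F : ℂ) ^ 2 * (T : ℂ)).re = (Fintype.card F : ℝ) ^ 2 * T := by
    rw [← Complex.ofReal_natCast, ← Complex.ofReal_pow, ← Complex.ofReal_mul, Complex.ofReal_re]
  rw [h5] at hre
  have h6 := mul_le_mul_of_nonneg_left (SF_trivial F E ψ) hc1
  have h7 : -R.re ≤ ‖R‖ := (neg_le_abs _).trans (Complex.abs_re_le_norm R)
  have h8 : (Fintype.card F : ℝ) ^ 2 * T ≤ 0 := mul_nonpos_of_nonneg_of_nonpos (by positivity) hT0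
  linarith
end
end WB

/-- The sieving criterion (Theorem 3.3): with sieving primes `p_1, …, p_s` (the
distinct primes dividing `q^n - 1` but not `k`), `δ = 1 - ∑ 1/pᵢ > 0` and
`Δ = (s-1)/δ + 2`, if `q^(n/2-2) > 4 Δ 2^(ω(k))` then every pair of traces is
achieved by some `ξ` with `ξ + ξ⁻¹` primitive. -/
theorem stmt6 (q n : ℕ) (hq : IsPrimePow q) (hn : 0 < n)
    (k : ℕ) (hk : k ∣ q ^ n - 1)
    (ps : Finset ℕ) (hps : ps = (q ^ n - 1).primeFactors.filter fun p => ¬ p ∣ k)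
    (δ Δ : ℝ) (hδdef : δ = 1 - ∑ p ∈ ps, (1 : ℝ) / p) (hδ : 0 < δ)
    (hΔdef : Δ = ((ps.card : ℝ) - 1) / δ + 2)
    (hcond : (q : ℝ) ^ ((n : ℝ) / 2 - 2) > 4 * Δ * 2 ^ k.primeFactors.card)
    (F E : Type*) [Field F] [Fintype F] [Field E] [Fintype E] [Algebra F E]
    (hF : Fintype.card F = q) (hE : Fintype.card E = q ^ n) (a b : F) :
    ∃ ξ : E, ξ ≠ 0 ∧ Algebra.trace F E ξ = a ∧ Algebra.trace F E ξ⁻¹ = b ∧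
      orderOf (ξ + ξ⁻¹) = q ^ n - 1 := by
  classical
  letI : Fintype (MulChar E ℂ) := Fintype.ofFinite _
  have hE1 : 1 < Fintype.card E := Fintype.one_lt_card
  have hN : 0 < q ^ n - 1 := by omega
  have hq0 : 0 < q := hq.pos
  have hk0 : k ≠ 0 := by rintro rfl; rw [zero_dvd_iff] at hk; omega
  by_contra hcon
  push Not at hcon
  have hkp : ∀ p ∈ k.primeFactors, p.Prime ∧ p ∣ Fintype.card E - 1 := by
    intro p hp
    rw [hE]
    exact ⟨Nat.prime_of_mem_primeFactors hp, (Nat.dvd_of_mem_primeFactors hp).trans hk⟩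
  have hpsp : ∀ p ∈ ps, p.Prime ∧ p ∣ Fintype.card E - 1 ∧ p ∣ ∏ p ∈ ps, p := by
    intro p hp
    have hp' := hp
    rw [hps, Finset.mem_filter] at hp'
    rw [hE]
    exact ⟨Nat.prime_of_mem_primeFactors hp'.1, Nat.dvd_of_mem_primeFactors hp'.1, Finset.dvd_prod_of_mem _ hp⟩
  have hpos : ∀ p : ℕ, p.Prime → 0 < 1 - 1 / (p : ℝ) := by
    intro p hp
    rw [sub_pos, div_lt_one (by exact_mod_cast hp.pos)]
    exact_mod_cast hp.one_lt
  set θ : ℝ := ∏ p ∈ k.primeFactors, (1 - 1 / (p : ℝ)) with hθ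
  have hθ0 : 0 < θ := Finset.prod_pos fun p hp => hpos p (hkp p hp).1
  have hsum : ∑ p ∈ ps, (1 - 1 / (p : ℝ)) = ps.card - 1 + δ := by
    rw [Finset.sum_sub_distrib, hδdef]; simp
  have hr1 := WB.Rep.prodInd (E := E) k.primeFactors hkp
  have hr2 := WB.Rep.sumInd (E := E) ps (∏ p ∈ ps, p) hpsp (1 - ps.card)
  rw [hsum] at hr2
  have hc2 : (1 - (ps.card : ℝ) + (ps.card - 1 + δ)) = δ := by ring
  rw [hc2] at hr2
  have h2 : (1 : ℝ) ≤ 2 ^ k.primeFactors.card := one_le_pow₀ (by norm_num)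
  have hr := WB.Rep.mul hr1 hr2 (by
    refine Nat.Coprime.prod_left fun p hp => Nat.Coprime.prod_right fun r hr => ?_
    refine (Nat.coprime_primes (hkp p hp).1 (hpsp r hr).1).2 ?_
    rintro rfl
    rw [hps, Finset.mem_filter] at hr
    exact hr.2 (Nat.dvd_of_mem_primeFactors hp)) hθ0.le hδ.le
    (mul_nonneg hθ0.le (by linarith))
  have hg01 : ∀ (l : ℕ) (y : E), 0 ≤ WB.gInd E l y ∧ WB.gInd E l y ≤ 1 := by
    intro l y
    rw [WB.gInd]; split_ifs <;> norm_num
  have hmain := WB.sieve_main F E _ _ _ _ hr (mul_nonneg hθ0.le hδ.le) a b (by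
    intro x hx ha hb
    have hx0 : x ≠ 0 := by rintro rfl; simp at hx
    have hord := hcon x hx0 ha hb
    have hex : ∃ p : ℕ, p.Prime ∧ p ∣ q ^ n - 1 ∧ (x + x⁻¹) ^ ((q ^ n - 1) / p) = 1 := by
      by_contra hne
      push Not at hne
      refine hord (orderOf_eq_of_pow_and_pow_div_prime hN ?_ hne)
      rw [← hE]
      exact FiniteField.pow_card_sub_one_eq_one _ hx
    obtain ⟨p, hp1, hp2, hp3⟩ := hex
    have hg0 : WB.gInd E p (x + x⁻¹) = 0 := by
      rw [WB.gInd, hE, if_pos hp3]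
    by_cases hpk : p ∣ k
    · rw [Finset.prod_eq_zero (Nat.mem_primeFactors.2 ⟨hp1, hpk, hk0⟩) hg0, zero_mul]
    · have hpps : p ∈ ps := by
        rw [hps, Finset.mem_filter]
        exact ⟨Nat.mem_primeFactors.2 ⟨hp1, hp2, hN.ne'⟩, hpk⟩
      refine mul_nonpos_of_nonneg_of_nonpos (Finset.prod_nonneg fun l _ => (hg01 l _).1) ?_
      rw [← Finset.add_sum_erase _ _ hpps, hg0]
      have h3 : ∑ l ∈ ps.erase p, WB.gInd E l (x + x⁻¹) ≤ ∑ l ∈ ps.erase p, (1 : ℝ) :=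
        Finset.sum_le_sum fun l _ => (hg01 l _).2
      rw [Finset.sum_const, Finset.card_erase_of_mem hpps, nsmul_eq_mul, mul_one,
        Nat.cast_sub (Finset.card_pos.2 ⟨p, hpps⟩)] at h3
      push_cast at h3
      linarith)
  rw [hF, hE] at hmain
  have hΔ : δ * Δ = ps.card - 1 + 2 * δ := by
    rw [hΔdef]; field_simp
  set w : ℝ := 2 ^ k.primeFactors.card with hw
  have hqR : (0 : ℝ) < q := by exact_mod_cast hq0
  have hQ : √((q ^ n : ℕ) : ℝ) = (q : ℝ) ^ ((n : ℝ) / 2 - 2) * (q : ℝ) ^ 2 := by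
    rw [← Real.rpow_natCast (q : ℝ) 2, ← Real.rpow_add hqR, Real.sqrt_eq_rpow, Nat.cast_pow,
      ← Real.rpow_natCast (q : ℝ) n, ← Real.rpow_mul hqR.le]
    congr 1; push_cast; ring
  set S : ℝ := √((q ^ n : ℕ) : ℝ) with hS
  have hSS : S * S = ((q ^ n : ℕ) : ℝ) := Real.mul_self_sqrt (by positivity)
  have hS1 : 1 ≤ S := by
    rw [hS, Real.one_le_sqrt]
    exact_mod_cast (by omega : 1 ≤ q ^ n)
  have hlt : 4 * Δ * w * (q : ℝ) ^ 2 < S := by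
    rw [hQ]
    exact mul_lt_mul_of_pos_right hcond (by positivity)
  rw [← hSS] at hmain
  have heq : θ * δ * (S * S - 3) ≤ θ * δ * (4 * S * ((q : ℝ) ^ 2 * (w * Δ) - 1)) := by
    refine hmain.trans (le_of_eq ?_)
    linear_combination (-4 * S * (q : ℝ) ^ 2 * θ * w) * hΔ
  have h9 := le_of_mul_le_mul_left heq (mul_pos hθ0 hδ)
  nlinarith [mul_lt_mul_of_pos_right hlt (by linarith : 0 < S)]
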